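/- arXiv:1901.01802 — 2 statements merged into one kernel-verified Lean document; each statement's English description precedes it below -/
import Mathlib

section
/- Let n ≥ 2, let 2 ≤ k ≤ n be an integer, let p ≥ (n−k+2)/(n−k+1), let ε > 0 and A ∈ ℕ. Suppose that for every β ∈ (0,1) there is a constant C_β > 0 such that for all 0 < δ < β, all finite direction-separated families 𝕋 of δ-tubes in ℝⁿ and all choices of cap partition, ‖Σ_{T∈𝕋} χ_T‖_{BL^p_{k,A}(ℝⁿ)} ≤ C_β · δ^{−(n−1−n/p)−ε} · (Σ_{T∈𝕋} |T|)^{1/p}. Then there is a constant C > 0 (depending on n, p, k, ε, A and the constants C_β) such that for all 0 < δ < 1 and all finite direction-separated families 𝕋 of δ-tubes in ℝⁿ, ‖Σ_{T∈𝕋} χ_T‖_{L^p(ℝⁿ)} ≤ C · δ^{−(n−1−n/p)−ε} · (Σ_{T∈𝕋} |T|)^{1/p}. -/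
open MeasureTheory Metric InnerProductGeometry
open scoped RealInnerProductSpace ENNReal NNReal

noncomputable section

/-- Euclidean space ℝⁿ. -/
abbrev Esp (n : ℕ) : Type := EuclideanSpace ℝ (Fin n)

/-- The δ-tube with centre `a` and unit direction `v`. -/
def tube (n : ℕ) (δ : ℝ) (a v : Esp n) : Set (Esp n) :=
  {x | |⟪x - a, v⟫| ≤ 1 / 2 ∧ ‖(x - a) - ⟪x - a, v⟫ • v‖ ≤ δ}

/-- Unsigned angle between a vector and a linear subspace: the infimum of the angles
between `v` and the nonzero elements of `V`. -/
def angleSub {n : ℕ} (v : Esp n) (V : Submodule ℝ (Esp n)) : ℝ :=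
  ⨅ w : {w : Esp n // w ∈ V ∧ w ≠ 0}, angle v w.1

/-- Angle between the cap of radius β centred at ω and a subspace. -/
def angleCap {n : ℕ} (β : ℝ) (ω : Esp n) (V : Submodule ℝ (Esp n)) : ℝ :=
  ⨅ u : {u : Esp n // ‖u‖ = 1 ∧ ‖u - ω‖ < β}, angleSub u.1 V

/-- `W` is a maximal β-separated subset of the unit sphere (maximality being expressed by
the fact that every unit vector lies in the cap around some element of `W`). -/
def MaximalSeparated (n : ℕ) (β : ℝ) (W : Set (Esp n)) : Prop :=
  (∀ ω ∈ W, ‖ω‖ = 1) ∧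
  (∀ ω ∈ W, ∀ ω' ∈ W, ω ≠ ω' → β ≤ ‖ω - ω'‖) ∧
  (∀ u : Esp n, ‖u‖ = 1 → ∃ ω ∈ W, ‖u - ω‖ < β)

/-- The quantity μ_𝕋(B) in the definition of the k-broad norm, for the δ-ball centred
at `c`.  The family 𝕋 of tubes is `T : ι → Set (Esp n)`, and `ω i ∈ W` is the centre of
the cap containing the direction of the tube `T i` (so the cap partition is
𝕋[τ_{ω₀}] = {T i : ω i = ω₀}). -/
def broadMu (n k A : ℕ) (p β δ : ℝ) (W : Set (Esp n)) {ι : Type} [Fintype ι]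
    (T : ι → Set (Esp n)) (ω : ι → Esp n) (c : Esp n) : ℝ≥0∞ :=
  ⨅ V : {V : Fin A → Submodule ℝ (Esp n) // ∀ a, Module.finrank ℝ (V a) = k - 1},
    ⨆ ω₀ : {ω₀ : Esp n // ω₀ ∈ W ∧ ∀ a, β < angleCap β ω₀ (V.1 a)},
      ∫⁻ x in ball c δ,
        (∑' i : {i : ι // ω i = ω₀.1}, Set.indicator (T i.1) (fun _ => (1 : ℝ≥0∞)) x) ^ p

/-- The k-broad norm ‖Σ_{T∈𝕋} χ_T‖_{BL^p_{k,A}(U)}, relative to a family of δ-balls with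
centres `b j`, a set `W` of cap centres and a cap assignment `ω` for the tubes `T`. -/
def broadNorm (n k A : ℕ) (p β δ : ℝ) (W : Set (Esp n)) {ι : Type} [Fintype ι]
    (T : ι → Set (Esp n)) (ω : ι → Esp n) (b : ℕ → Esp n) (U : Set (Esp n)) : ℝ≥0∞ :=
  (∑' j : ℕ, volume (ball (b j) δ ∩ U) / volume (ball (b j) δ) *
      broadMu n k A p β δ W T ω (b j)) ^ (1 / p)

/-- A finitely-overlapping cover of ℝⁿ by δ-balls. -/
def FinOverlapCover (n : ℕ) (δ : ℝ) (b : ℕ → Esp n) : Prop :=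
  (∀ x : Esp n, ∃ j, x ∈ ball (b j) δ) ∧
  (∀ x : Esp n, {j : ℕ | x ∈ ball (b j) δ}.Finite ∧ {j : ℕ | x ∈ ball (b j) δ}.ncard ≤ 5 ^ n)

section Separated

theorem exists_maximal_separated {X : Type*} [NormedAddCommGroup X] (S : Set X) {r : ℝ}
    (hr : 0 < r) :
    ∃ N ⊆ S, (∀ x ∈ N, ∀ y ∈ N, x ≠ y → r ≤ ‖x - y‖) ∧ ∀ x ∈ S, ∃ y ∈ N, ‖x - y‖ < r := by
  obtain ⟨N, hN⟩ := zorn_subset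
    {N : Set X | N ⊆ S ∧ ∀ x ∈ N, ∀ y ∈ N, x ≠ y → r ≤ ‖x - y‖} (by
      intro c hc hchain
      refine ⟨⋃₀ c, ⟨Set.sUnion_subset fun s hs => (hc hs).1, ?_⟩,
        fun s hs => Set.subset_sUnion_of_mem hs⟩
      rintro x ⟨s, hs, hxs⟩ y ⟨t, ht, hyt⟩ hxy
      rcases hchain.total hs ht with h | h
      · exact (hc ht).2 x (h hxs) y hyt hxy
      · exact (hc hs).2 x hxs y (h hyt) hxy)
  refine ⟨N, hN.prop.1, hN.prop.2, fun x hx => ?_⟩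
  by_contra! hcon
  have hmem : insert x N ∈ {N : Set X | N ⊆ S ∧ ∀ x ∈ N, ∀ y ∈ N, x ≠ y → r ≤ ‖x - y‖} := by
    refine ⟨Set.insert_subset hx hN.prop.1, ?_⟩
    rintro y (rfl | hy) z (rfl | hz) hyz
    · exact absurd rfl hyz
    · exact hcon z hz
    · rw [norm_sub_rev]; exact hcon y hy
    · exact hN.prop.2 y hy z hz hyz
  have hxN : x ∈ N := hN.le_of_ge hmem (Set.subset_insert x N) (Set.mem_insert x N)
  have := hcon x hxN
  simp at this
  linarith

variable {F : Type*} [NormedAddCommGroup F] [NormedSpace ℝ F] [FiniteDimensional ℝ F]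

/-- Disjoint balls of radius `r / 2` inside a spherical shell. -/
theorem card_mul_pow_le_of_separated (s : Finset F) (c : F) {r R₁ R₂ : ℝ} (hr : 0 < r)
    (hR₁ : 0 ≤ R₁) (hR : R₁ ≤ R₂)
    (hsep : ∀ x ∈ s, ∀ y ∈ s, x ≠ y → r ≤ ‖x - y‖)
    (hs : ∀ x ∈ s, R₁ + r / 2 ≤ ‖x - c‖ ∨ R₁ = 0) (hs' : ∀ x ∈ s, ‖x - c‖ + r / 2 ≤ R₂) :
    (s.card : ℝ) * (r / 2) ^ Module.finrank ℝ F ≤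
      R₂ ^ Module.finrank ℝ F - (if R₁ = 0 then 0 else R₁ ^ Module.finrank ℝ F) := by
  borelize F
  let μ : Measure F := Measure.addHaar
  have hr2 : 0 < r / 2 := by positivity
  have hdisj : (s : Set F).PairwiseDisjoint fun x => ball x (r / 2) := by
    intro x hx y hy hxy
    refine ball_disjoint_ball ?_
    rw [dist_eq_norm]
    linarith [hsep x hx y hy hxy]
  have hsub : (⋃ x ∈ s, ball x (r / 2)) ⊆ ball c R₂ \ ball c R₁ := by
    refine Set.iUnion₂_subset fun x hx z hz => ?_
    rw [mem_ball, dist_eq_norm] at hz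
    simp only [Set.mem_sdiff, mem_ball, dist_eq_norm, not_lt]
    have h1 : ‖z - c‖ ≤ ‖z - x‖ + ‖x - c‖ := by
      simpa using norm_add_le (z - x) (x - c)
    have h2 : ‖x - c‖ ≤ ‖z - x‖ + ‖z - c‖ := by
      have := norm_add_le (x - z) (z - c)
      rw [norm_sub_rev x z] at this
      simpa using this
    constructor
    · linarith [hs' x hx]
    · rcases hs x hx with h | h
      · linarith
      · rw [h]; positivity
  have hmeas := measure_mono (μ := μ) hsub
  rw [measure_biUnion_finset hdisj fun _ _ => measurableSet_ball,
    measure_sdiff (ball_subset_ball hR) measurableSet_ball.nullMeasurableSet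
      measure_ball_lt_top.ne] at hmeas
  have hpos : 0 < μ.real (ball (0 : F) 1) :=
    ENNReal.toReal_pos (measure_ball_pos μ _ one_pos).ne' measure_ball_lt_top.ne
  have hball : ∀ (x : F) {t : ℝ}, 0 < t →
      μ (ball x t) = ENNReal.ofReal (t ^ Module.finrank ℝ F * μ.real (ball (0 : F) 1)) := by
    intro x t ht
    rw [Measure.addHaar_ball_of_pos μ x ht, ENNReal.ofReal_mul (by positivity), Measure.real,
      ENNReal.ofReal_toReal measure_ball_lt_top.ne]
  have hball1 : μ (ball c R₁) = ENNReal.ofReal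
      ((if R₁ = 0 then 0 else R₁ ^ Module.finrank ℝ F) * μ.real (ball (0 : F) 1)) := by
    split_ifs with h
    · simp [h]
    · exact hball c (lt_of_le_of_ne hR₁ (Ne.symm h))
  rcases s.eq_empty_or_nonempty with rfl | ⟨x, hx⟩
  · split_ifs
    · simpa using pow_nonneg (hR₁.trans hR) _
    · simpa using pow_le_pow_left₀ hR₁ hR _
  have hR₂ : 0 < R₂ := by linarith [hs' x hx, norm_nonneg (x - c)]
  have hI : 0 ≤ (if R₁ = 0 then 0 else R₁ ^ Module.finrank ℝ F) := by
    split_ifs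
    · exact le_rfl
    · positivity
  rw [Finset.sum_congr rfl fun x _ => hball x hr2, Finset.sum_const, nsmul_eq_mul, hball c hR₂,
    hball1, ← ENNReal.ofReal_sub _ (by positivity), ← ENNReal.ofReal_natCast,
    ← ENNReal.ofReal_mul (by positivity), ← sub_mul, ← mul_assoc] at hmeas
  have hp : 0 < (s.card : ℝ) * (r / 2) ^ Module.finrank ℝ F * μ.real (ball (0 : F) 1) := by
    have : 0 < s.card := Finset.card_pos.2 ⟨x, hx⟩
    positivity
  have := (ENNReal.ofReal_le_ofReal_iff' ).1 hmeas
  rcases this with h | h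
  · exact le_of_mul_le_mul_right h hpos
  · linarith

theorem card_le_of_separated_ball (s : Finset F) (c : F) {r : ℝ} (hr : 0 < r) (M : ℝ)
    (hM : 0 ≤ M) (hsep : ∀ x ∈ s, ∀ y ∈ s, x ≠ y → r ≤ ‖x - y‖)
    (hs : ∀ x ∈ s, ‖x - c‖ ≤ M * r) :
    (s.card : ℝ) ≤ (2 * M + 1) ^ Module.finrank ℝ F := by
  have h := card_mul_pow_le_of_separated s c hr le_rfl (R₂ := (2 * M + 1) * (r / 2))
    (by positivity) hsep (fun _ _ => Or.inr rfl) (fun x hx => by linarith [hs x hx])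
  rw [if_pos rfl, sub_zero, mul_pow] at h
  exact le_of_mul_le_mul_right h (by positivity)

theorem pow_sub_pow_le_mul {a b : ℝ} (hb : 0 ≤ b) (hab : b ≤ a) (d : ℕ) :
    a ^ d - b ^ d ≤ d * (a - b) * a ^ (d - 1) := by
  induction d with
  | zero => simp
  | succ d ih =>
    have ha : 0 ≤ a := hb.trans hab
    rcases d with _ | d
    · simp
    · have h1 : b ^ (d + 1) ≤ a ^ (d + 1) := pow_le_pow_left₀ hb hab _
      simp only [Nat.add_sub_cancel] at ih ⊢
      push_cast at ih ⊢
      have h2 : a * (a ^ (d + 1) - b ^ (d + 1)) ≤ a * (((d : ℝ) + 1) * (a - b) * a ^ d) :=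
        mul_le_mul_of_nonneg_left ih ha
      have h3 : (a - b) * b ^ (d + 1) ≤ (a - b) * a ^ (d + 1) :=
        mul_le_mul_of_nonneg_left h1 (sub_nonneg.2 hab)
      calc a ^ (d + 1 + 1) - b ^ (d + 1 + 1)
          = a * (a ^ (d + 1) - b ^ (d + 1)) + (a - b) * b ^ (d + 1) := by ring
        _ ≤ _ := add_le_add h2 h3
        _ = _ := by ring

theorem card_le_of_separated_sphere (s : Finset F) {r : ℝ} (hr : 0 < r) (hr1 : r ≤ 1)
    (hd : 1 ≤ Module.finrank ℝ F)
    (hsep : ∀ x ∈ s, ∀ y ∈ s, x ≠ y → r ≤ ‖x - y‖) (hs : ∀ x ∈ s, ‖x‖ = 1) :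
    (s.card : ℝ) ≤
      Module.finrank ℝ F * 4 ^ Module.finrank ℝ F * (r⁻¹) ^ (Module.finrank ℝ F - 1) := by
  have h := card_mul_pow_le_of_separated s (0 : F) hr (R₁ := 1 - r / 2) (R₂ := 1 + r / 2)
    (by linarith) (by linarith) hsep (fun x hx => Or.inl (by simp [hs x hx]))
    (fun x hx => by simp [hs x hx])
  rw [if_neg (by linarith)] at h
  obtain ⟨d, hd'⟩ : ∃ d, Module.finrank ℝ F = d + 1 := ⟨_, (Nat.sub_add_cancel hd).symm⟩
  rw [hd'] at h ⊢
  have h2 := pow_sub_pow_le_mul (a := 1 + r / 2) (b := 1 - r / 2) (by linarith) (by linarith)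
    (d + 1)
  have h3 : (1 + r / 2) ^ d ≤ 2 ^ d := pow_le_pow_left₀ (by linarith) (by linarith) _
  simp only [Nat.add_sub_cancel] at h2 ⊢
  have h4 : (s.card : ℝ) * (r / 2) ^ (d + 1) ≤ ((d + 1 : ℕ) : ℝ) * r * 2 ^ d := by
    refine h.trans (h2.trans ?_)
    have : (1 + r / 2 - (1 - r / 2)) = r := by ring
    rw [this]
    gcongr
  have h5 : ((d + 1 : ℕ) : ℝ) * 4 ^ (d + 1) * r⁻¹ ^ d * (r / 2) ^ (d + 1) =
      2 * (((d + 1 : ℕ) : ℝ) * r * 2 ^ d) := by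
    rw [show (4 : ℝ) = 2 * 2 by norm_num, inv_pow, div_pow, mul_pow]
    field_simp
    ring
  have h6 : 0 ≤ ((d + 1 : ℕ) : ℝ) * r * 2 ^ d := by positivity
  exact le_of_mul_le_mul_right (by linarith) (show 0 < (r / 2) ^ (d + 1) by positivity)

end Separated

theorem exists_finOverlapCover (n : ℕ) (hn : 1 ≤ n) {δ : ℝ} (hδ : 0 < δ) :
    ∃ b : ℕ → Esp n, FinOverlapCover n δ b := by
  obtain ⟨N, -, hsep, hcov⟩ := exists_maximal_separated (Set.univ : Set (Esp n)) hδ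
  have hfin : ∀ x : Esp n, (N ∩ ball x δ).Finite ∧ (N ∩ ball x δ).ncard ≤ 5 ^ n := by
    intro x
    have hcard : ∀ s : Finset (Esp n), (s : Set (Esp n)) ⊆ N ∩ ball x δ → s.card ≤ 5 ^ n := by
      intro s hs
      have := card_le_of_separated_ball s x hδ 2 (by norm_num)
        (fun y hy z hz => hsep y (hs hy).1 z (hs hz).1)
        (fun y hy => by
          have := (hs hy).2
          rw [mem_ball, dist_eq_norm] at this
          linarith)
      rw [finrank_euclideanSpace_fin] at this
      norm_num at this
      exact_mod_cast this
    have hf : (N ∩ ball x δ).Finite := by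
      by_contra hinf
      obtain ⟨s, hs, hs'⟩ := Set.Infinite.exists_subset_card_eq hinf (5 ^ n + 1)
      have := hcard s hs
      omega
    refine ⟨hf, ?_⟩
    rw [Set.ncard_eq_toFinset_card _ hf]
    exact hcard _ (by simp)
  have hinf : N.Infinite := by
    intro hNf
    have hb : Bornology.IsBounded (⋃ y ∈ N, ball y δ) :=
      (Bornology.isBounded_biUnion hNf).2 fun _ _ => isBounded_ball
    have huniv : (⋃ y ∈ N, ball y δ) = Set.univ := by
      refine Set.eq_univ_of_forall fun x => ?_
      obtain ⟨y, hy, hxy⟩ := hcov x trivial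
      exact Set.mem_biUnion hy (by rwa [mem_ball, dist_eq_norm])
    rw [huniv] at hb
    have : Nonempty (Fin n) := ⟨⟨0, hn⟩⟩
    exact NormedSpace.unbounded_univ ℝ (Esp n) hb
  have hcount : N.Countable := by
    obtain ⟨D, hDc, hDd⟩ := TopologicalSpace.exists_countable_dense (Esp n)
    have hsub : N ⊆ ⋃ x ∈ D, N ∩ ball x δ := by
      intro y hy
      obtain ⟨x, hx, hxy⟩ := hDd.exists_dist_lt y hδ
      exact Set.mem_biUnion hx ⟨hy, hxy⟩
    exact (hDc.biUnion fun x _ => (hfin x).1.countable).mono hsub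
  have : Countable N := hcount
  have : Infinite N := hinf.to_subtype
  obtain ⟨e⟩ := nonempty_equiv_of_countable (α := ℕ) (β := N)
  refine ⟨fun j => (e j : Esp n), fun x => ?_, fun x => ?_⟩
  · obtain ⟨y, hy, hxy⟩ := hcov x trivial
    refine ⟨e.symm ⟨y, hy⟩, ?_⟩
    simpa [mem_ball, dist_eq_norm] using hxy
  · have himg : (fun j => (e j : Esp n)) '' {j : ℕ | x ∈ ball (e j : Esp n) δ} ⊆
        N ∩ ball x δ := by
      rintro _ ⟨j, hj, rfl⟩
      exact ⟨(e j).2, by simpa [mem_ball, dist_comm] using hj⟩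
    have hinj : Function.Injective fun j => (e j : Esp n) :=
      Subtype.val_injective.comp e.injective
    constructor
    · exact ((hfin x).1.subset himg).of_finite_image hinj.injOn
    · rw [← Set.ncard_image_of_injective _ hinj]
      exact (Set.ncard_le_ncard himg (hfin x).1).trans (hfin x).2

theorem exists_maximalSeparated (n : ℕ) {β : ℝ} (hβ : 0 < β) :
    ∃ W : Set (Esp n), MaximalSeparated n β W := by
  obtain ⟨N, hN, hsep, hcov⟩ := exists_maximal_separated {u : Esp n | ‖u‖ = 1} hβ
  exact ⟨N, fun ω hω => hN hω, hsep, hcov⟩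

theorem MaximalSeparated.finite {n : ℕ} {β : ℝ} {W : Set (Esp n)} (hW : MaximalSeparated n β W)
    (hβ : 0 < β) : W.Finite := by
  by_contra hinf
  obtain ⟨M, hM⟩ := exists_nat_gt ((2 * β⁻¹ + 1) ^ n)
  obtain ⟨s, hs, hs'⟩ := Set.Infinite.exists_subset_card_eq hinf M
  have h := card_le_of_separated_ball s (0 : Esp n) hβ β⁻¹ (by positivity)
    (fun x hx y hy => hW.2.1 x (hs hx) y (hs hy))
    (fun x hx => by rw [sub_zero, hW.1 x (hs hx), inv_mul_cancel₀ hβ.ne'])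
  rw [finrank_euclideanSpace_fin, hs'] at h
  linarith

theorem norm_sub_normalize_le_angle {E : Type*} [NormedAddCommGroup E] [InnerProductSpace ℝ E]
    {u w : E} (hu : ‖u‖ = 1) (hw : w ≠ 0) : ‖u - ‖w‖⁻¹ • w‖ ≤ angle u w := by
  have hw' : 0 < ‖w‖ := norm_pos_iff.2 hw
  refine (sq_le_sq₀ (norm_nonneg _) (angle_nonneg _ _)).1 ?_
  have hcos := Real.one_sub_sq_div_two_le_cos (x := angle u w)
  have hn : ‖‖w‖⁻¹ • w‖ = 1 := by rw [norm_smul, norm_inv, norm_norm, inv_mul_cancel₀ hw'.ne']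
  have hin : ⟪u, ‖w‖⁻¹ • w⟫ = Real.cos (angle u w) := by
    rw [cos_angle, hu, inner_smul_right]
    field_simp
  rw [norm_sub_sq_real, hu, hn, hin]
  linarith

theorem exists_unit_mem_of_angleCap_le {n : ℕ} {β : ℝ} (hβ : 0 < β) {ω : Esp n} (hω : ‖ω‖ = 1)
    {V : Submodule ℝ (Esp n)} (hV : 1 ≤ Module.finrank ℝ V) (h : angleCap β ω V ≤ β) :
    ∃ w ∈ V, ‖w‖ = 1 ∧ ‖ω - w‖ < 4 * β := by
  have : Nonempty {u : Esp n // ‖u‖ = 1 ∧ ‖u - ω‖ < β} := ⟨⟨ω, hω, by simpa using hβ⟩⟩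
  obtain ⟨⟨u, hu, huω⟩, hu2⟩ := exists_lt_of_ciInf_lt (lt_of_le_of_lt h (by linarith : β < 2 * β))
  have hVnt : Nontrivial V := Module.nontrivial_of_finrank_pos (R := ℝ) (by omega)
  obtain ⟨w₀, hw₀⟩ := exists_ne (0 : V)
  have : Nonempty {w : Esp n // w ∈ V ∧ w ≠ 0} := ⟨⟨w₀, w₀.2, by simpa using hw₀⟩⟩
  obtain ⟨⟨w, hwV, hw0⟩, hw2⟩ :=
    exists_lt_of_ciInf_lt (lt_of_lt_of_le hu2 (by linarith : 2 * β ≤ 3 * β))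
  have hw' : 0 < ‖w‖ := norm_pos_iff.2 hw0
  refine ⟨‖w‖⁻¹ • w, V.smul_mem _ hwV, ?_, ?_⟩
  · rw [norm_smul, norm_inv, norm_norm, inv_mul_cancel₀ hw'.ne']
  · have h1 := norm_sub_normalize_le_angle hu hw0
    have h2 := norm_sub_le_norm_sub_add_norm_sub ω u (‖w‖⁻¹ • w)
    rw [norm_sub_rev ω u] at h2
    simp only at hw2
    linarith

/-- Few caps make a small angle with a given subspace. -/
theorem card_narrow_le {n : ℕ} {β : ℝ} (hβ : 0 < β) (hβ1 : β ≤ 1) {V : Submodule ℝ (Esp n)}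
    (hV : 1 ≤ Module.finrank ℝ V) (s : Finset (Esp n)) (hs : ∀ ω ∈ s, ‖ω‖ = 1)
    (hsep : ∀ x ∈ s, ∀ y ∈ s, x ≠ y → β ≤ ‖x - y‖) (hang : ∀ ω ∈ s, angleCap β ω V ≤ β) :
    (s.card : ℝ) ≤ 11 ^ n * (n * 4 ^ n) * β⁻¹ ^ (Module.finrank ℝ V - 1) := by
  classical
  have hw : ∀ ω : s, ∃ w : V, ‖w‖ = 1 ∧ ‖(ω : Esp n) - w‖ < 4 * β := fun ω => by
    obtain ⟨w, hwV, hw1, hw2⟩ :=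
      exists_unit_mem_of_angleCap_le hβ (hs ω ω.2) hV (hang ω ω.2)
    exact ⟨⟨w, hwV⟩, hw1, hw2⟩
  choose w hw1 hw2 using hw
  obtain ⟨N, hN, hNsep, hNcov⟩ := exists_maximal_separated (Set.range w) hβ
  have hNfin : N.Finite := (Set.finite_range w).subset hN
  have hNcard := card_le_of_separated_sphere hNfin.toFinset hβ hβ1 hV
    (fun x hx y hy => hNsep x (by simpa using hx) y (by simpa using hy))
    (fun x hx => by
      obtain ⟨ω, rfl⟩ := hN (by simpa using hx)
      exact hw1 ω)
  have hsub : s ⊆ hNfin.toFinset.biUnion fun y => {x ∈ s | ‖x - (y : Esp n)‖ ≤ 5 * β} := by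
    intro x hx
    obtain ⟨y, hy, hxy⟩ := hNcov (w ⟨x, hx⟩) ⟨_, rfl⟩
    refine Finset.mem_biUnion.2 ⟨y, by simpa using hy, Finset.mem_filter.2 ⟨hx, ?_⟩⟩
    have h2 := norm_sub_le_norm_sub_add_norm_sub x (w ⟨x, hx⟩ : Esp n) y
    have h3 : ‖(w ⟨x, hx⟩ : Esp n) - y‖ < β := by simpa using hxy
    linarith [hw2 ⟨x, hx⟩]
  have hcard : s.card ≤ hNfin.toFinset.card * 11 ^ n := by
    refine (Finset.card_le_card hsub).trans (Finset.card_biUnion_le_card_mul _ _ _ ?_)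
    intro y _
    have := card_le_of_separated_ball {x ∈ s | ‖x - (y : Esp n)‖ ≤ 5 * β} (y : Esp n) hβ 5
      (by norm_num)
      (fun a ha b hb => hsep a (Finset.mem_filter.1 ha).1 b (Finset.mem_filter.1 hb).1)
      (fun a ha => (Finset.mem_filter.1 ha).2)
    rw [finrank_euclideanSpace_fin] at this
    norm_num at this
    exact_mod_cast this
  have hd : Module.finrank ℝ V ≤ n := by
    simpa using Submodule.finrank_le V
  calc (s.card : ℝ) ≤ hNfin.toFinset.card * 11 ^ n := by exact_mod_cast hcard
    _ ≤ (Module.finrank ℝ V * 4 ^ Module.finrank ℝ V * β⁻¹ ^ (Module.finrank ℝ V - 1)) *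
        11 ^ n := by gcongr
    _ ≤ (n * 4 ^ n * β⁻¹ ^ (Module.finrank ℝ V - 1)) * 11 ^ n := by
      gcongr
      norm_num
    _ = _ := by ring

section Rescaling

variable {n : ℕ}

/-- The linear map scaling by `α` along the unit vector `ω` and by `γ` orthogonally to it. -/
def axialScale (ω : Esp n) (α γ : ℝ) : Esp n →ₗ[ℝ] Esp n :=
  γ • LinearMap.transvection (innerSL ℝ ω).toLinearMap ((α / γ - 1) • ω)

theorem axialScale_apply (ω : Esp n) (α : ℝ) {γ : ℝ} (hγ : γ ≠ 0) (x : Esp n) :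
    axialScale ω α γ x = γ • x + ((α - γ) * ⟪ω, x⟫) • ω := by
  simp only [axialScale, LinearMap.smul_apply, LinearMap.transvection.apply, smul_add, smul_smul]
  congr 2
  simp only [ContinuousLinearMap.coe_coe, innerSL_apply_apply]
  field_simp

theorem det_axialScale (hn : 1 ≤ n) {ω : Esp n} (hω : ‖ω‖ = 1) (α : ℝ) {γ : ℝ} (hγ : γ ≠ 0) :
    LinearMap.det (axialScale ω α γ) = α * γ ^ (n - 1) := by
  obtain ⟨d, rfl⟩ : ∃ d, n = d + 1 := ⟨n - 1, by omega⟩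
  rw [axialScale, LinearMap.det_smul, LinearMap.transvection.det, finrank_euclideanSpace_fin]
  simp only [ContinuousLinearMap.coe_coe, innerSL_apply_apply, inner_smul_right,
    real_inner_self_eq_norm_sq, hω, Nat.add_sub_cancel]
  field_simp
  ring

theorem inner_axialScale {ω : Esp n} (hω : ‖ω‖ = 1) (α : ℝ) {γ : ℝ} (hγ : γ ≠ 0) (x : Esp n) :
    ⟪ω, axialScale ω α γ x⟫ = α * ⟪ω, x⟫ := by
  rw [axialScale_apply ω α hγ, inner_add_right, inner_smul_right, inner_smul_right,
    real_inner_self_eq_norm_sq, hω]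
  ring

theorem norm_axialScale_sq {ω : Esp n} (hω : ‖ω‖ = 1) (α : ℝ) {γ : ℝ} (hγ : γ ≠ 0) (x : Esp n) :
    ‖axialScale ω α γ x‖ ^ 2 = γ ^ 2 * ‖x‖ ^ 2 + (α ^ 2 - γ ^ 2) * ⟪ω, x⟫ ^ 2 := by
  rw [axialScale_apply ω α hγ, norm_add_sq_real, norm_smul, norm_smul, hω, inner_smul_left,
    inner_smul_right, real_inner_comm, mul_pow, mul_pow]
  simp only [Real.norm_eq_abs, sq_abs, RCLike.conj_to_real]
  rw [real_inner_comm]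
  ring

theorem norm_axialScale_le {ω : Esp n} (hω : ‖ω‖ = 1) {α γ : ℝ} (hα : 0 ≤ α) (hγ : 0 < γ)
    (hαγ : α ≤ γ) (x : Esp n) : ‖axialScale ω α γ x‖ ≤ γ * ‖x‖ := by
  refine (sq_le_sq₀ (norm_nonneg _) (by positivity)).1 ?_
  rw [norm_axialScale_sq hω α hγ.ne', mul_pow]
  nlinarith [mul_nonneg (sub_nonneg.2 (pow_le_pow_left₀ hα hαγ 2)) (sq_nonneg ⟪ω, x⟫)]

theorem isClosed_tube (δ : ℝ) (a v : Esp n) : IsClosed (tube n δ a v) := by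
  have h1 : Continuous fun x : Esp n => |⟪x - a, v⟫| := by fun_prop
  have h2 : Continuous fun x : Esp n => ‖(x - a) - ⟪x - a, v⟫ • v‖ := by fun_prop
  exact (isClosed_le h1 continuous_const).inter (isClosed_le h2 continuous_const)

theorem volume_tube_center (δ : ℝ) (a v : Esp n) :
    volume (tube n δ a v) = volume (tube n δ 0 v) := by
  have : tube n δ a v = (fun x => x + (-a)) ⁻¹' tube n δ 0 v := by
    ext x
    simp [tube, sub_eq_add_neg]
  rw [this, measure_preimage_add_right]

theorem volume_tube_one (hn : 1 ≤ n) {δ : ℝ} (hδ : 0 < δ) {v : Esp n} (hv : ‖v‖ = 1) :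
    volume (tube n δ 0 v) = ENNReal.ofReal (δ ^ (n - 1)) * volume (tube n 1 0 v) := by
  have hδ' : δ⁻¹ ≠ 0 := inv_ne_zero hδ.ne'
  have hdet := det_axialScale hn hv 1 hδ'
  have hpre : tube n δ 0 v = axialScale v 1 δ⁻¹ ⁻¹' tube n 1 0 v := by
    ext x
    have h1 : ⟪axialScale v 1 δ⁻¹ x, v⟫ = ⟪x, v⟫ := by
      rw [real_inner_comm, inner_axialScale hv 1 hδ', one_mul, real_inner_comm]
    have h2 : axialScale v 1 δ⁻¹ x - ⟪x, v⟫ • v = δ⁻¹ • (x - ⟪x, v⟫ • v) := by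
      rw [axialScale_apply v 1 hδ', real_inner_comm v x]
      module
    simp only [tube, Set.mem_preimage, Set.mem_ofPred_eq, sub_zero, h1, h2, norm_smul, norm_inv,
      Real.norm_eq_abs, abs_of_pos hδ]
    rw [inv_mul_le_iff₀ hδ, mul_one]
  rw [hpre, Measure.addHaar_preimage_linearMap volume (by rw [hdet]; positivity), hdet]
  congr 2
  rw [one_mul, inv_pow, inv_inv, abs_of_pos (by positivity)]

theorem volume_tube_direction (δ : ℝ) {v w : Esp n} (hv : ‖v‖ = 1) (hw : ‖w‖ = 1) :
    volume (tube n δ 0 v) = volume (tube n δ 0 w) := by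
  let e : Esp n ≃ₗᵢ[ℝ] Esp n := Submodule.reflection (ℝ ∙ (v - w))ᗮ
  have he : e v = w := Submodule.reflection_sub (hv.trans hw.symm)
  have hpre : tube n δ 0 v = e ⁻¹' tube n δ 0 w := by
    ext x
    have h1 : ⟪e x, w⟫ = ⟪x, v⟫ := by rw [← he, e.inner_map_map]
    have h2 : e x - ⟪x, v⟫ • w = e (x - ⟪x, v⟫ • v) := by
      rw [map_sub, map_smul, he]
    simp only [tube, Set.mem_preimage, Set.mem_ofPred_eq, sub_zero, h1, h2, e.norm_map]
  rw [hpre]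
  exact e.measurePreserving.measure_preimage (isClosed_tube _ _ _).nullMeasurableSet

theorem volume_tube (hn : 1 ≤ n) {δ δ' : ℝ} (hδ : 0 < δ) (hδ' : 0 < δ') (a a' : Esp n)
    {v v' : Esp n} (hv : ‖v‖ = 1) (hv' : ‖v'‖ = 1) :
    volume (tube n δ' a' v') = ENNReal.ofReal ((δ' / δ) ^ (n - 1)) * volume (tube n δ a v) := by
  rw [volume_tube_center δ', volume_tube_center δ, volume_tube_direction δ' hv' hv,
    volume_tube_one hn hδ hv, volume_tube_one hn hδ' hv, ← mul_assoc,
    ← ENNReal.ofReal_mul (by positivity), div_pow, div_mul_cancel₀ _ (by positivity)]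

theorem norm_sub_inner_smul_le {v : Esp n} (hv : ‖v‖ = 1) (x : Esp n) :
    ‖x - ⟪x, v⟫ • v‖ ≤ ‖x‖ := by
  refine (sq_le_sq₀ (norm_nonneg _) (norm_nonneg _)).1 ?_
  rw [norm_sub_sq_real, inner_smul_right, norm_smul, hv, mul_one, Real.norm_eq_abs, sq_abs]
  nlinarith [sq_nonneg ⟪x, v⟫]

theorem norm_sub_le_of_one_le {u v : Esp n} (hu : ‖u‖ = 1) (hv : ‖v‖ = 1) {a b : ℝ}
    (ha : 1 ≤ a) (hb : 1 ≤ b) : ‖u - v‖ ≤ ‖a • u - b • v‖ := by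
  refine (sq_le_sq₀ (norm_nonneg _) (norm_nonneg _)).1 ?_
  rw [norm_sub_sq_real, norm_sub_sq_real, norm_smul, norm_smul, inner_smul_left, inner_smul_right,
    hu, hv]
  simp only [Real.norm_eq_abs, mul_one, sq_abs, RCLike.conj_to_real]
  have hc : ⟪u, v⟫ ≤ 1 := by simpa [hu, hv] using real_inner_le_norm u v
  nlinarith [sq_nonneg (a - b), mul_nonneg (sub_nonneg.2 hc)
    (sub_nonneg.2 (one_le_mul_of_one_le_of_one_le ha hb))]

variable {β : ℝ} {ω : Esp n}

theorem inner_mem_of_norm_sub_lt (hβ1 : β ≤ 1 / 10) (hω : ‖ω‖ = 1) {v : Esp n} (hv : ‖v‖ = 1)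
    (hvω : ‖v - ω‖ < β) :
    199 / 200 ≤ ⟪ω, v⟫ ∧ ⟪ω, v⟫ ≤ 1 ∧ 1 - ⟪ω, v⟫ ^ 2 ≤ β ^ 2 := by
  have h1 : ⟪ω, v⟫ ≤ 1 := by simpa [hω, hv] using real_inner_le_norm ω v
  have h2 : ‖v - ω‖ ^ 2 = 2 - 2 * ⟪ω, v⟫ := by
    rw [norm_sub_sq_real, hω, hv, real_inner_comm]; ring
  have h3 : ‖v - ω‖ ^ 2 ≤ β ^ 2 := pow_le_pow_left₀ (norm_nonneg _) hvω.le 2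
  have hβ0 : 0 ≤ β := (norm_nonneg _).trans hvω.le
  have h4 : β ^ 2 ≤ (1 / 10) ^ 2 := pow_le_pow_left₀ hβ0 hβ1 2
  refine ⟨by linarith, h1, ?_⟩
  nlinarith

/-- The dilation straightening the cap of radius `β` about `ω` to unit size. -/
abbrev capScale (β : ℝ) (ω : Esp n) : Esp n →ₗ[ℝ] Esp n := axialScale ω (1 / 5) (1 / (5 * β))

/-- The direction of the image of a `v`-tube under `capScale β ω`. -/
def capDir (β : ℝ) (ω v : Esp n) : Esp n := ‖capScale β ω v‖⁻¹ • capScale β ω v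

theorem norm_capScale_bounds (hβ : 0 < β) (hβ1 : β ≤ 1 / 10) (hω : ‖ω‖ = 1) {v : Esp n}
    (hv : ‖v‖ = 1) (hvω : ‖v - ω‖ < β) :
    0 < ‖capScale β ω v‖ ∧ ‖capScale β ω v‖ ≤ 3 / 10 := by
  obtain ⟨h1, h2, h3⟩ := inner_mem_of_norm_sub_lt hβ1 hω hv hvω
  have hγ : 1 / (5 * β) ≠ 0 := by positivity
  have hsq := norm_axialScale_sq hω (1 / 5) hγ v
  have hin := inner_axialScale hω (1 / 5) hγ v
  constructor
  · rw [norm_pos_iff]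
    intro h0
    rw [h0, inner_zero_right] at hin
    linarith
  · refine (sq_le_sq₀ (norm_nonneg _) (by norm_num)).1 ?_
    rw [hsq, hv]
    have h4 : (1 / (5 * β)) ^ 2 * (1 - ⟪ω, v⟫ ^ 2) ≤ 1 / 25 := by
      calc (1 / (5 * β)) ^ 2 * (1 - ⟪ω, v⟫ ^ 2) ≤ (1 / (5 * β)) ^ 2 * β ^ 2 := by gcongr
        _ = 1 / 25 := by field_simp; norm_num
    nlinarith

theorem norm_capDir (hβ : 0 < β) (hβ1 : β ≤ 1 / 10) (hω : ‖ω‖ = 1) {v : Esp n}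
    (hv : ‖v‖ = 1) (hvω : ‖v - ω‖ < β) : ‖capDir β ω v‖ = 1 := by
  have h := (norm_capScale_bounds hβ hβ1 hω hv hvω).1
  rw [capDir, norm_smul, norm_inv, norm_norm, inv_mul_cancel₀ h.ne']

theorem norm_smul_capDir (hβ : 0 < β) (hβ1 : β ≤ 1 / 10) (hω : ‖ω‖ = 1) {v : Esp n}
    (hv : ‖v‖ = 1) (hvω : ‖v - ω‖ < β) :
    ‖capScale β ω v‖ • capDir β ω v = capScale β ω v := by
  have h := (norm_capScale_bounds hβ hβ1 hω hv hvω).1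
  rw [capDir, smul_inv_smul₀ h.ne']

theorem capScale_mem_tube (hβ : 0 < β) (hβ1 : β ≤ 1 / 10) (hω : ‖ω‖ = 1) {v : Esp n}
    (hv : ‖v‖ = 1) (hvω : ‖v - ω‖ < β) {δ : ℝ} (hδβ : δ < β) {a x : Esp n}
    (hx : x ∈ tube n δ a v) :
    capScale β ω x ∈ tube n (δ / (5 * β)) (capScale β ω a) (capDir β ω v) := by
  obtain ⟨hx1, hx2⟩ := hx
  obtain ⟨-, hb⟩ := norm_capScale_bounds hβ hβ1 hω hv hvω
  have hdir := norm_capDir hβ hβ1 hω hv hvω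
  set s := ⟪x - a, v⟫
  set z := x - a - s • v with hz
  set v' := capDir β ω v
  have hdecomp : capScale β ω x - capScale β ω a =
      (s * ‖capScale β ω v‖) • v' + capScale β ω z := by
    rw [mul_smul, norm_smul_capDir hβ hβ1 hω hv hvω, ← map_smul, ← map_add, ← map_sub, hz]
    congr 1
    abel
  have hLz : ‖capScale β ω z‖ ≤ δ / (5 * β) := by
    refine (norm_axialScale_le hω (by norm_num) (by positivity) ?_ z).trans ?_
    · exact one_div_le_one_div_of_le (by positivity) (by linarith)
    · exact (mul_le_mul_of_nonneg_left hx2 (by positivity)).trans_eq (by ring)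
  have hin : ⟪(s * ‖capScale β ω v‖) • v' + capScale β ω z, v'⟫ =
      s * ‖capScale β ω v‖ + ⟪capScale β ω z, v'⟫ := by
    rw [inner_add_left, inner_smul_left, real_inner_self_eq_norm_sq, hdir]
    simp
  refine ⟨?_, ?_⟩
  · rw [hdecomp, hin]
    have h1 : |⟪capScale β ω z, v'⟫| ≤ δ / (5 * β) := by
      refine (abs_real_inner_le_norm _ _).trans ?_
      rw [hdir, mul_one]
      exact hLz
    have h2 : δ / (5 * β) ≤ 1 / 5 := by
      rw [div_le_div_iff₀ (by positivity) (by norm_num)]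
      linarith
    have h3 : |s * ‖capScale β ω v‖| ≤ 1 / 2 * (3 / 10) := by
      rw [abs_mul, abs_norm]
      gcongr
    have h4 := abs_add_le (s * ‖capScale β ω v‖) ⟪capScale β ω z, v'⟫
    linarith
  · rw [hdecomp, hin]
    have : (s * ‖capScale β ω v‖) • v' + capScale β ω z -
        (s * ‖capScale β ω v‖ + ⟪capScale β ω z, v'⟫) • v' =
        capScale β ω z - ⟪capScale β ω z, v'⟫ • v' := by module
    rw [this]
    exact (norm_sub_inner_smul_le hdir _).trans hLz

theorem capDir_separated (hβ : 0 < β) (hβ1 : β ≤ 1 / 10) (hω : ‖ω‖ = 1) {v w : Esp n}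
    (hv : ‖v‖ = 1) (hvω : ‖v - ω‖ < β) (hw : ‖w‖ = 1) (hwω : ‖w - ω‖ < β) :
    ‖v - w‖ / (5 * β) ≤ ‖capDir β ω v - capDir β ω w‖ := by
  obtain ⟨hv1, hv2, -⟩ := inner_mem_of_norm_sub_lt hβ1 hω hv hvω
  obtain ⟨hw1, hw2, -⟩ := inner_mem_of_norm_sub_lt hβ1 hω hw hwω
  obtain ⟨hv3, hv4⟩ := norm_capScale_bounds hβ hβ1 hω hv hvω
  obtain ⟨hw3, hw4⟩ := norm_capScale_bounds hβ hβ1 hω hw hwω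
  have hγ : 1 / (5 * β) ≠ 0 := by positivity
  have hinv := inner_axialScale hω (1 / 5) hγ v
  have hinw := inner_axialScale hω (1 / 5) hγ w
  have hv5 := norm_smul_capDir hβ hβ1 hω hv hvω
  have hw5 := norm_smul_capDir hβ hβ1 hω hw hwω
  have hw6 := norm_capDir hβ hβ1 hω hw hwω
  set s := ⟪ω, v⟫
  set t := ⟪ω, w⟫
  have hs0 : 0 < s := by linarith
  have ht0 : 0 < t := by linarith
  have hlip : ‖v - w‖ ≤ ‖s⁻¹ • v - t⁻¹ • w‖ :=
    norm_sub_le_of_one_le hv hw ((one_le_inv₀ hs0).2 hv2) ((one_le_inv₀ ht0).2 hw2)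
  have hperp : ⟪ω, s⁻¹ • v - t⁻¹ • w⟫ = 0 := by
    rw [inner_sub_right, inner_smul_right, inner_smul_right, inv_mul_cancel₀ hs0.ne',
      inv_mul_cancel₀ ht0.ne', sub_self]
  have himg : capScale β ω (s⁻¹ • v - t⁻¹ • w) = (1 / (5 * β)) • (s⁻¹ • v - t⁻¹ • w) := by
    rw [capScale, axialScale_apply ω _ hγ, hperp]
    simp
  set ρ := s⁻¹ * ‖capScale β ω v‖
  set σ := t⁻¹ * ‖capScale β ω w‖
  have hρ : 0 < ρ := by positivity
  have hσ : 0 < σ := by positivity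
  have hinvb : ∀ {u : ℝ}, 199 / 200 ≤ u → u⁻¹ ≤ 200 / 199 := fun h => by
    rw [inv_le_comm₀ (by linarith) (by norm_num)]
    norm_num
    exact h
  have hρ' : ρ ≤ 31 / 100 := by
    calc ρ ≤ 200 / 199 * (3 / 10) := by
          exact mul_le_mul (hinvb hv1) hv4 hv3.le (by norm_num)
      _ ≤ _ := by norm_num
  have hσ' : σ ≤ 31 / 100 := by
    calc σ ≤ 200 / 199 * (3 / 10) := by
          exact mul_le_mul (hinvb hw1) hw4 hw3.le (by norm_num)
      _ ≤ _ := by norm_num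
  set v' := capDir β ω v
  set w' := capDir β ω w
  have hcv : ρ * ⟪ω, v'⟫ = 1 / 5 := by
    rw [← hv5, inner_smul_right] at hinv
    simp only [ρ]
    rw [mul_assoc, hinv]
    field_simp
  have hcw : σ * ⟪ω, w'⟫ = 1 / 5 := by
    rw [← hw5, inner_smul_right] at hinw
    simp only [σ]
    rw [mul_assoc, hinw]
    field_simp
  have himg2 : capScale β ω (s⁻¹ • v - t⁻¹ • w) = ρ • (v' - w') + (ρ - σ) • w' := by
    have : ρ • (v' - w') + (ρ - σ) • w' = ρ • v' - σ • w' := by module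
    rw [this, map_sub, map_smul, map_smul, ← hv5, ← hw5, smul_smul, smul_smul]
  have hdiff : ρ - σ = 5 * ρ * σ * ⟪ω, w' - v'⟫ := by
    rw [inner_sub_right]
    linear_combination 5 * σ * hcv - 5 * ρ * hcw
  have hdiff' : |ρ - σ| ≤ 5 * (31 / 100) * (31 / 100) * ‖v' - w'‖ := by
    rw [hdiff, abs_mul, abs_of_pos (by positivity : 0 < 5 * ρ * σ)]
    have : |⟪ω, w' - v'⟫| ≤ ‖v' - w'‖ := by
      refine (abs_real_inner_le_norm _ _).trans ?_
      rw [hω, one_mul, norm_sub_rev]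
    gcongr
  have hle : ‖v - w‖ / (5 * β) ≤ ‖capScale β ω (s⁻¹ • v - t⁻¹ • w)‖ := by
    rw [himg, norm_smul, Real.norm_of_nonneg (by positivity), div_eq_mul_one_div, mul_comm]
    gcongr
  refine hle.trans ?_
  rw [himg2]
  refine (norm_add_le _ _).trans ?_
  rw [norm_smul, norm_smul, hw6, mul_one, Real.norm_of_nonneg hρ.le, Real.norm_eq_abs]
  nlinarith [norm_nonneg (v' - w')]

end Rescaling

/-- The `L^p` estimate with constant `B` for direction-separated families of `δ`-tubes. -/
def TubeBound (n : ℕ) (p δ : ℝ) (B : ℝ≥0∞) : Prop :=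
  ∀ (m : ℕ) (a v : Fin m → Esp n), (∀ i, ‖v i‖ = 1) → (∀ i j, i ≠ j → δ ≤ ‖v i - v j‖) →
    ∫⁻ x, (∑ i, Set.indicator (tube n δ (a i) (v i)) (fun _ => (1 : ℝ≥0∞)) x) ^ p ≤
      B * ∑ i, volume (tube n δ (a i) (v i))

theorem TubeBound.fintype {n : ℕ} {p δ : ℝ} {B : ℝ≥0∞} (h : TubeBound n p δ B) {ι : Type*}
    [Fintype ι] (a v : ι → Esp n) (hv : ∀ i, ‖v i‖ = 1)
    (hsep : ∀ i j, i ≠ j → δ ≤ ‖v i - v j‖) :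
    ∫⁻ x, (∑ i, Set.indicator (tube n δ (a i) (v i)) (fun _ => (1 : ℝ≥0∞)) x) ^ p ≤
      B * ∑ i, volume (tube n δ (a i) (v i)) := by
  let e := (Fintype.equivFin ι).symm
  have := h _ (a ∘ e) (v ∘ e) (fun i => hv _) (fun i j hij => hsep _ _ (e.injective.ne hij))
  simp only [Function.comp] at this
  rw [e.sum_comp fun i => volume (tube n δ (a i) (v i))] at this
  convert this using 4 with x
  exact (e.sum_comp fun i => Set.indicator (tube n δ (a i) (v i)) (fun _ => (1 : ℝ≥0∞)) x).symm

theorem measurable_sum_indicator {α ι : Type*} [MeasurableSpace α] [Fintype ι] {T : ι → Set α}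
    (hT : ∀ i, MeasurableSet (T i)) :
    Measurable fun x => ∑ i, Set.indicator (T i) (fun _ => (1 : ℝ≥0∞)) x :=
  Finset.measurable_sum _ fun i _ => measurable_const.indicator (hT i)

theorem TubeBound.rescale {n : ℕ} (hn : 1 ≤ n) {p δ β : ℝ} {B : ℝ≥0∞} (hp : 0 ≤ p) (hδ : 0 < δ)
    (hδβ : δ < β) (hβ1 : β ≤ 1 / 10) (h : TubeBound n p (δ / (5 * β)) B) {ι : Type*} [Fintype ι]
    (a v : ι → Esp n) (hv : ∀ i, ‖v i‖ = 1) (hsep : ∀ i j, i ≠ j → δ ≤ ‖v i - v j‖)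
    {ω : Esp n} (hω : ‖ω‖ = 1) (hvω : ∀ i, ‖v i - ω‖ < β) :
    ∫⁻ x, (∑ i, Set.indicator (tube n δ (a i) (v i)) (fun _ => (1 : ℝ≥0∞)) x) ^ p ≤
      5 * B * ∑ i, volume (tube n δ (a i) (v i)) := by
  have hβ : 0 < β := hδ.trans hδβ
  set δ' := δ / (5 * β) with hδ'
  have hδ'0 : 0 < δ' := by positivity
  have hdir : ∀ i, ‖capDir β ω (v i)‖ = 1 := fun i => norm_capDir hβ hβ1 hω (hv i) (hvω i)
  set G : Esp n → ℝ≥0∞ := fun y => (∑ i, Set.indicator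
    (tube n δ' (capScale β ω (a i)) (capDir β ω (v i))) (fun _ => (1 : ℝ≥0∞)) y) ^ p
  have hG : Measurable G :=
    (measurable_sum_indicator fun i => (isClosed_tube _ _ _).measurableSet).pow_const p
  have hdet : LinearMap.det (capScale β ω) = 1 / 5 * (1 / (5 * β)) ^ (n - 1) :=
    det_axialScale hn hω _ (by positivity)
  have hdet0 : LinearMap.det (capScale β ω) ≠ 0 := by rw [hdet]; positivity
  have hL : Measurable (capScale β ω) :=
    (LinearMap.continuous_of_finiteDimensional _).measurable
  calc ∫⁻ x, (∑ i, Set.indicator (tube n δ (a i) (v i)) (fun _ => (1 : ℝ≥0∞)) x) ^ p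
      ≤ ∫⁻ x, G (capScale β ω x) := by
        refine lintegral_mono fun x => ENNReal.rpow_le_rpow (Finset.sum_le_sum fun i _ => ?_) hp
        by_cases hx : x ∈ tube n δ (a i) (v i)
        · rw [Set.indicator_of_mem hx, Set.indicator_of_mem
            (capScale_mem_tube hβ hβ1 hω (hv i) (hvω i) hδβ hx)]
        · rw [Set.indicator_of_notMem hx]
          exact zero_le
    _ = ENNReal.ofReal |(LinearMap.det (capScale β ω))⁻¹| * ∫⁻ y, G y := by
        rw [← lintegral_map hG hL, Measure.map_linearMap_addHaar_eq_smul_addHaar volume hdet0,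
          lintegral_smul_measure, smul_eq_mul]
    _ ≤ ENNReal.ofReal |(LinearMap.det (capScale β ω))⁻¹| *
        (B * ∑ i, volume (tube n δ' (capScale β ω (a i)) (capDir β ω (v i)))) := by
        gcongr
        refine h.fintype _ _ hdir fun i j hij => le_trans ?_
          (capDir_separated hβ hβ1 hω (hv i) (hvω i) (hv j) (hvω j))
        rw [hδ']
        gcongr
        exact hsep i j hij
    _ = ENNReal.ofReal |(LinearMap.det (capScale β ω))⁻¹| *
        (B * (ENNReal.ofReal ((δ' / δ) ^ (n - 1)) * ∑ i, volume (tube n δ (a i) (v i)))) := by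
        rw [Finset.mul_sum _ _ (ENNReal.ofReal ((δ' / δ) ^ (n - 1)))]
        congr 2
        exact Finset.sum_congr rfl fun i _ => volume_tube hn hδ hδ'0 _ _ (hv i) (hdir i)
    _ = (ENNReal.ofReal |(LinearMap.det (capScale β ω))⁻¹| * ENNReal.ofReal ((δ' / δ) ^ (n - 1))) *
        B * ∑ i, volume (tube n δ (a i) (v i)) := by ring
    _ = 5 * B * ∑ i, volume (tube n δ (a i) (v i)) := by
        congr 2
        rw [← ENNReal.ofReal_mul (by positivity), hdet, abs_of_pos (by positivity)]
        have : (1 / 5 * (1 / (5 * β)) ^ (n - 1))⁻¹ * (δ' / δ) ^ (n - 1) = 5 := by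
          rw [hδ', show δ / (5 * β) / δ = 1 / (5 * β) by field_simp]
          field_simp
        rw [this]
        norm_num

/-- The infimum defining `broadMu` is attained. -/
theorem exists_broadMu_eq {n k A : ℕ} (hkn : k ≤ n) (p β δ : ℝ) {W : Set (Esp n)}
    (hW : W.Finite) {ι : Type} [Fintype ι] (T : ι → Set (Esp n)) (ω : ι → Esp n) (c : Esp n) :
    ∃ V : Fin A → Submodule ℝ (Esp n), (∀ a, Module.finrank ℝ (V a) = k - 1) ∧
      ∀ ω₀ ∈ W, (∀ a, β < angleCap β ω₀ (V a)) →
        ∫⁻ x in ball c δ,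
          (∑' i : {i : ι // ω i = ω₀}, Set.indicator (T i.1) (fun _ => (1 : ℝ≥0∞)) x) ^ p ≤
        broadMu n k A p β δ W T ω c := by
  set I : Esp n → ℝ≥0∞ := fun ω₀ => ∫⁻ x in ball c δ,
    (∑' i : {i : ι // ω i = ω₀}, Set.indicator (T i.1) (fun _ => (1 : ℝ≥0∞)) x) ^ p with hI
  let f : {V : Fin A → Submodule ℝ (Esp n) // ∀ a, Module.finrank ℝ (V a) = k - 1} → ℝ≥0∞ :=
    fun V => ⨆ ω₀ : {ω₀ : Esp n // ω₀ ∈ W ∧ ∀ a, β < angleCap β ω₀ (V.1 a)}, I ω₀.1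
  have hf : broadMu n k A p β δ W T ω c = sInf (Set.range f) := rfl
  have hne : (Set.range f).Nonempty := by
    obtain ⟨s, -, hs⟩ : ∃ s : Submodule ℝ (Esp n), s ≤ ⊤ ∧ Module.finrank ℝ s = k - 1 := by
      obtain ⟨g, hg⟩ := exists_linearIndependent_of_le_finrank (R := ℝ) (M := Esp n) (n := k - 1)
        (by rw [finrank_euclideanSpace_fin]; omega)
      exact ⟨Submodule.span ℝ (Set.range g), le_top, by rw [finrank_span_eq_card hg]; simp⟩
    exact ⟨_, ⟨fun _ => s, fun _ => hs⟩, rfl⟩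
  have hfin : (Set.range f).Finite := by
    refine (hW.finite_subsets.image fun S : Set (Esp n) => ⨆ ω₀ : S, I ω₀).subset ?_
    rintro _ ⟨V, rfl⟩
    exact ⟨{ω₀ | ω₀ ∈ W ∧ ∀ a, β < angleCap β ω₀ (V.1 a)}, fun _ h => h.1, rfl⟩
  obtain ⟨V, hV⟩ := hne.csInf_mem hfin
  refine ⟨V.1, V.2, fun ω₀ hω₀ hang => ?_⟩
  rw [hf, ← hV]
  exact le_iSup (fun ω₀ : {ω₀ : Esp n // ω₀ ∈ W ∧ ∀ a, β < angleCap β ω₀ (V.1 a)} => I ω₀.1)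
    ⟨ω₀, hω₀, hang⟩

section BroadNarrow

variable {n k A : ℕ} {p β δ : ℝ}

theorem sum_fiber_eq {ι X : Type*} [Fintype ι] [DecidableEq X] (ω : ι → X) (s : Finset X)
    (hs : ∀ i, ω i ∈ s) (g : ι → ℝ≥0∞) :
    ∑ i, g i = ∑ ω₀ ∈ s, ∑' i : {i : ι // ω i = ω₀}, g i.1 := by
  rw [← Finset.sum_fiberwise_of_maps_to (s := Finset.univ) (t := s) (g := ω) fun i _ => hs i]
  refine Finset.sum_congr rfl fun ω₀ _ => ?_
  rw [tsum_fintype]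
  exact Finset.sum_subtype _ (by simp) g

/-- The broad–narrow dichotomy on a single ball. -/
theorem lintegral_ball_le_broad_add_narrow (hkn : k ≤ n) (hp : 1 ≤ p) (s : Finset (Esp n))
    {m : ℕ} {T : Fin m → Set (Esp n)} (hT : ∀ i, MeasurableSet (T i)) {ω : Fin m → Esp n}
    (hω : ∀ i, ω i ∈ s) {N : ℝ≥0∞}
    (hN : ∀ V : Submodule ℝ (Esp n), Module.finrank ℝ V = k - 1 →
      ∀ t ⊆ s, (∀ ω₀ ∈ t, angleCap β ω₀ V ≤ β) → (t.card : ℝ≥0∞) ≤ N) (c : Esp n) :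
    ∫⁻ x in ball c δ, (∑ i, Set.indicator (T i) (fun _ => (1 : ℝ≥0∞)) x) ^ p ≤
      2 ^ (p - 1) * ((A * N) ^ (p - 1) * (∑ ω₀ ∈ s, ∫⁻ x in ball c δ,
          (∑' i : {i // ω i = ω₀}, Set.indicator (T i.1) (fun _ => (1 : ℝ≥0∞)) x) ^ p) +
        (s.card : ℝ≥0∞) ^ p * broadMu n k A p β δ s T ω c) := by
  classical
  obtain ⟨V, hV, hbr⟩ := exists_broadMu_eq (A := A) hkn p β δ s.finite_toSet T ω c
  set f : Esp n → Esp n → ℝ≥0∞ := fun ω₀ x =>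
    ∑' i : {i // ω i = ω₀}, Set.indicator (T i.1) (fun _ => (1 : ℝ≥0∞)) x with hf
  have hfm : ∀ ω₀, Measurable fun x => f ω₀ x ^ p := fun ω₀ => by
    simp only [hf, tsum_fintype]
    exact (measurable_sum_indicator fun i : {i // ω i = ω₀} => hT i.1).pow_const p
  set br := s.filter fun ω₀ => ∀ a, β < angleCap β ω₀ (V a) with hbrdef
  set nr := s.filter fun ω₀ => ¬ ∀ a, β < angleCap β ω₀ (V a) with hnrdef
  have hnr : (nr.card : ℝ≥0∞) ≤ A * N := by
    have hsub : nr ⊆ Finset.univ.biUnion fun a => s.filter fun ω₀ => angleCap β ω₀ (V a) ≤ β := by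
      intro ω₀ h
      rw [hnrdef, Finset.mem_filter] at h
      push Not at h
      obtain ⟨h1, a, ha⟩ := h
      exact Finset.mem_biUnion.2 ⟨a, Finset.mem_univ _, Finset.mem_filter.2 ⟨h1, ha⟩⟩
    calc (nr.card : ℝ≥0∞)
        ≤ ((∑ a, (s.filter fun ω₀ => angleCap β ω₀ (V a) ≤ β).card : ℕ) : ℝ≥0∞) := by
          exact_mod_cast (Finset.card_le_card hsub).trans Finset.card_biUnion_le
      _ ≤ ∑ a : Fin A, N := by
          push_cast
          exact Finset.sum_le_sum fun a _ => hN (V a) (hV a) _ (Finset.filter_subset _ _)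
            fun ω₀ h => (Finset.mem_filter.1 h).2
      _ = A * N := by simp
  have hpt : ∀ x, (∑ i, Set.indicator (T i) (fun _ => (1 : ℝ≥0∞)) x) ^ p ≤
      2 ^ (p - 1) * ((A * N) ^ (p - 1) * ∑ ω₀ ∈ s, f ω₀ x ^ p +
        (s.card : ℝ≥0∞) ^ (p - 1) * ∑ ω₀ ∈ br, f ω₀ x ^ p) := by
    intro x
    rw [sum_fiber_eq ω s hω fun i => Set.indicator (T i) (fun _ => (1 : ℝ≥0∞)) x,
      ← Finset.sum_filter_not_add_sum_filter s fun ω₀ => ∀ a, β < angleCap β ω₀ (V a)]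
    refine (ENNReal.rpow_add_le_mul_rpow_add_rpow _ _ hp).trans ?_
    gcongr
    · refine (ENNReal.rpow_sum_le_const_mul_sum_rpow _ _ hp).trans ?_
      have hp0 : 0 ≤ p - 1 := by linarith
      gcongr
      exact Finset.filter_subset _ _
    · refine (ENNReal.rpow_sum_le_const_mul_sum_rpow _ _ hp).trans ?_
      have hp0 : 0 ≤ p - 1 := by linarith
      gcongr
      exact Finset.filter_subset _ _
  calc _ ≤ ∫⁻ x in ball c δ, 2 ^ (p - 1) * ((A * N) ^ (p - 1) * ∑ ω₀ ∈ s, f ω₀ x ^ p +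
        (s.card : ℝ≥0∞) ^ (p - 1) * ∑ ω₀ ∈ br, f ω₀ x ^ p) := lintegral_mono hpt
    _ = 2 ^ (p - 1) * ((A * N) ^ (p - 1) * (∑ ω₀ ∈ s, ∫⁻ x in ball c δ, f ω₀ x ^ p) +
        (s.card : ℝ≥0∞) ^ (p - 1) * ∑ ω₀ ∈ br, ∫⁻ x in ball c δ, f ω₀ x ^ p) := by
        have hm : ∀ t : Finset (Esp n), Measurable fun x => ∑ ω₀ ∈ t, f ω₀ x ^ p :=
          fun t => Finset.measurable_sum _ fun ω₀ _ => hfm ω₀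
        have hm' : ∀ C D : ℝ≥0∞, Measurable fun x =>
            C * ∑ ω₀ ∈ s, f ω₀ x ^ p + D * ∑ ω₀ ∈ br, f ω₀ x ^ p :=
          fun C D => ((hm s).const_mul C).add ((hm br).const_mul D)
        rw [lintegral_const_mul _ (hm' _ _),
          lintegral_add_left ((hm s).const_mul _), lintegral_const_mul _ (hm s),
          lintegral_const_mul _ (hm br), lintegral_finsetSum _ fun ω₀ _ => hfm ω₀,
          lintegral_finsetSum _ fun ω₀ _ => hfm ω₀]
    _ ≤ _ := by
        gcongr 2 ^ (p - 1) * (_ + ?_)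
        calc (s.card : ℝ≥0∞) ^ (p - 1) * ∑ ω₀ ∈ br, ∫⁻ x in ball c δ, f ω₀ x ^ p
            ≤ (s.card : ℝ≥0∞) ^ (p - 1) * ∑ ω₀ ∈ br, broadMu n k A p β δ s T ω c := by
              gcongr with ω₀ h
              exact hbr ω₀ (Finset.mem_filter.1 h).1 (Finset.mem_filter.1 h).2
          _ ≤ (s.card : ℝ≥0∞) ^ (p - 1) * (s.card * broadMu n k A p β δ s T ω c) := by
              rw [Finset.sum_const, nsmul_eq_mul]
              gcongr
              exact Finset.filter_subset _ _
          _ = (s.card : ℝ≥0∞) ^ p * broadMu n k A p β δ s T ω c := by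
              rw [← mul_assoc]
              congr 1
              nth_rewrite 2 [← ENNReal.rpow_one (s.card : ℝ≥0∞)]
              rw [← ENNReal.rpow_add_of_nonneg _ _ (by linarith) zero_le_one, sub_add_cancel]

theorem FinOverlapCover.tsum_lintegral_ball_le {b : ℕ → Esp n} (hb : FinOverlapCover n δ b)
    {g : Esp n → ℝ≥0∞} (hg : Measurable g) :
    ∑' j, ∫⁻ x in ball (b j) δ, g x ≤ 5 ^ n * ∫⁻ x, g x := by
  simp_rw [← lintegral_indicator measurableSet_ball]
  rw [← lintegral_tsum fun j => (hg.indicator measurableSet_ball).aemeasurable,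
    ← lintegral_const_mul _ hg]
  refine lintegral_mono fun x => ?_
  have hx : ∀ j, Set.indicator (ball (b j) δ) g x =
      Set.indicator {j : ℕ | x ∈ ball (b j) δ} (fun _ => 1) j * g x := fun j => by
    by_cases h : x ∈ ball (b j) δ
    · rw [Set.indicator_of_mem h, Set.indicator_of_mem (by exact h), one_mul]
    · rw [Set.indicator_of_notMem h, Set.indicator_of_notMem (by exact h), zero_mul]
  simp_rw [hx]
  rw [ENNReal.tsum_mul_right, ← tsum_subtype, ENNReal.tsum_set_one]
  gcongr
  obtain ⟨hf, hc⟩ := hb.2 x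
  rw [← hf.cast_ncard_eq]
  exact_mod_cast hc

/-- The broad–narrow dichotomy. -/
theorem lintegral_le_broad_add_narrow (hkn : k ≤ n) (hp : 1 ≤ p) (hδ : 0 < δ)
    (s : Finset (Esp n)) {m : ℕ} {T : Fin m → Set (Esp n)} (hT : ∀ i, MeasurableSet (T i))
    {ω : Fin m → Esp n} (hω : ∀ i, ω i ∈ s) {N : ℝ≥0∞}
    (hN : ∀ V : Submodule ℝ (Esp n), Module.finrank ℝ V = k - 1 →
      ∀ t ⊆ s, (∀ ω₀ ∈ t, angleCap β ω₀ V ≤ β) → (t.card : ℝ≥0∞) ≤ N)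
    {b : ℕ → Esp n} (hb : FinOverlapCover n δ b) :
    ∫⁻ x, (∑ i, Set.indicator (T i) (fun _ => (1 : ℝ≥0∞)) x) ^ p ≤
      2 ^ (p - 1) * ((A * N) ^ (p - 1) * (5 ^ n * ∑ ω₀ ∈ s, ∫⁻ x,
          (∑ i : {i // ω i = ω₀}, Set.indicator (T i.1) (fun _ => (1 : ℝ≥0∞)) x) ^ p) +
        (s.card : ℝ≥0∞) ^ p * broadNorm n k A p β δ s T ω b Set.univ ^ p) := by
  classical
  have hbroad : broadNorm n k A p β δ s T ω b Set.univ ^ p =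
      ∑' j, broadMu n k A p β δ s T ω (b j) := by
    rw [broadNorm, ← ENNReal.rpow_mul, one_div_mul_cancel (by linarith), ENNReal.rpow_one]
    refine tsum_congr fun j => ?_
    rw [Set.inter_univ, ENNReal.div_self (measure_ball_pos _ _ hδ).ne' measure_ball_lt_top.ne,
      one_mul]
  have huniv : (⋃ j, ball (b j) δ) = Set.univ :=
    Set.eq_univ_of_forall fun x => Set.mem_iUnion.2 (hb.1 x)
  calc _ = ∫⁻ x in ⋃ j, ball (b j) δ,
        (∑ i, Set.indicator (T i) (fun _ => (1 : ℝ≥0∞)) x) ^ p := by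
        rw [huniv, setLIntegral_univ]
    _ ≤ ∑' j, ∫⁻ x in ball (b j) δ, (∑ i, Set.indicator (T i) (fun _ => (1 : ℝ≥0∞)) x) ^ p :=
        lintegral_iUnion_le _ _
    _ ≤ ∑' j, 2 ^ (p - 1) * ((A * N) ^ (p - 1) * (∑ ω₀ ∈ s, ∫⁻ x in ball (b j) δ,
          (∑' i : {i // ω i = ω₀}, Set.indicator (T i.1) (fun _ => (1 : ℝ≥0∞)) x) ^ p) +
        (s.card : ℝ≥0∞) ^ p * broadMu n k A p β δ s T ω (b j)) :=
        ENNReal.tsum_le_tsum fun j => lintegral_ball_le_broad_add_narrow hkn hp s hT hω hN (b j)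
    _ = 2 ^ (p - 1) * ((A * N) ^ (p - 1) * (∑ ω₀ ∈ s, ∑' j, ∫⁻ x in ball (b j) δ,
          (∑' i : {i // ω i = ω₀}, Set.indicator (T i.1) (fun _ => (1 : ℝ≥0∞)) x) ^ p) +
        (s.card : ℝ≥0∞) ^ p * ∑' j, broadMu n k A p β δ s T ω (b j)) := by
        rw [ENNReal.tsum_mul_left, ENNReal.tsum_add, ENNReal.tsum_mul_left, ENNReal.tsum_mul_left,
          Summable.tsum_finsetSum fun _ _ => ENNReal.summable]
    _ ≤ _ := by
        rw [hbroad, Finset.mul_sum s _ (5 ^ n)]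
        gcongr with ω₀ h
        simp only [tsum_fintype]
        exact hb.tsum_lintegral_ball_le
          ((measurable_sum_indicator fun i : {i // ω i = ω₀} => hT i.1).pow_const p)

end BroadNarrow

theorem tubeBound_of_card_le {n : ℕ} {p δ : ℝ} (hp : 1 ≤ p) {M : ℝ≥0∞}
    (hM : ∀ (m : ℕ) (v : Fin m → Esp n), (∀ i, ‖v i‖ = 1) →
      (∀ i j, i ≠ j → δ ≤ ‖v i - v j‖) → (m : ℝ≥0∞) ≤ M) :
    TubeBound n p δ (M ^ (p - 1)) := by
  intro m a v hv hsep
  have hp0 : 0 ≤ p - 1 := by linarith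
  have hT : ∀ i, MeasurableSet (tube n δ (a i) (v i)) :=
    fun i => (isClosed_tube _ _ _).measurableSet
  calc ∫⁻ x, (∑ i, Set.indicator (tube n δ (a i) (v i)) (fun _ => (1 : ℝ≥0∞)) x) ^ p
      ≤ ∫⁻ x, M ^ (p - 1) *
          ∑ i, Set.indicator (tube n δ (a i) (v i)) (fun _ => (1 : ℝ≥0∞)) x := by
        refine lintegral_mono fun x => (ENNReal.rpow_sum_le_const_mul_sum_rpow _ _ hp).trans ?_
        gcongr with i
        · simpa using hM m v hv hsep
        · by_cases h : x ∈ tube n δ (a i) (v i)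
          · simp [h]
          · simp [h, show 0 < p by linarith]
    _ = M ^ (p - 1) * ∑ i, volume (tube n δ (a i) (v i)) := by
        rw [lintegral_const_mul _ (measurable_sum_indicator hT),
          lintegral_finsetSum _ fun i _ => measurable_const.indicator (hT i)]
        simp only [lintegral_indicator_const (hT _), one_mul]

theorem card_le_of_separated_unit {n : ℕ} {β : ℝ} (hβ : 0 < β) (s : Finset (Esp n))
    (hs : ∀ x ∈ s, ‖x‖ = 1) (hsep : ∀ x ∈ s, ∀ y ∈ s, x ≠ y → β ≤ ‖x - y‖) :
    (s.card : ℝ≥0∞) ≤ ENNReal.ofReal ((2 * β⁻¹ + 1) ^ n) := by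
  have h := card_le_of_separated_ball s (0 : Esp n) hβ β⁻¹ (by positivity) hsep
    (fun x hx => by rw [sub_zero, hs x hx, inv_mul_cancel₀ hβ.ne'])
  rw [finrank_euclideanSpace_fin] at h
  rw [← ENNReal.ofReal_natCast]
  exact ENNReal.ofReal_le_ofReal h

theorem tubeBound_of_le {n : ℕ} {p β δ : ℝ} (hp : 1 ≤ p) (hβ : 0 < β) (hβδ : β ≤ δ) :
    TubeBound n p δ (ENNReal.ofReal ((2 * β⁻¹ + 1) ^ n) ^ (p - 1)) := by
  classical
  refine tubeBound_of_card_le hp fun m v hv hsep => ?_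
  have hinj : Function.Injective v := by
    intro i j hij
    by_contra h
    have := hsep i j h
    rw [hij, sub_self, norm_zero] at this
    linarith
  have h := card_le_of_separated_unit hβ (Finset.univ.image v)
    (fun x hx => by
      obtain ⟨i, -, rfl⟩ := Finset.mem_image.1 hx
      exact hv i)
    (fun x hx y hy hxy => by
      obtain ⟨i, -, rfl⟩ := Finset.mem_image.1 hx
      obtain ⟨j, -, rfl⟩ := Finset.mem_image.1 hy
      exact hβδ.trans (hsep i j fun h => hxy (by rw [h])))
  rwa [Finset.card_image_of_injective _ hinj, Finset.card_univ, Fintype.card_fin] at h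

/-- One step of the induction on scales. -/
theorem tubeBound_step {n k A : ℕ} (hk2 : 2 ≤ k) (hkn : k ≤ n) {p β δ : ℝ} (hp : 1 ≤ p)
    (hδ : 0 < δ) (hδβ : δ < β) (hβ1 : β ≤ 1 / 10) {D B : ℝ≥0∞}
    (hbroad : ∀ (m : ℕ) (a v : Fin m → Esp n),
      (∀ i, ‖v i‖ = 1) → (∀ i j, i ≠ j → δ ≤ ‖v i - v j‖) →
      ∀ (W : Set (Esp n)), MaximalSeparated n β W →
      ∀ (ω : Fin m → Esp n), (∀ i, ω i ∈ W ∧ ‖v i - ω i‖ < β) →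
      ∀ (b : ℕ → Esp n), FinOverlapCover n δ b →
        broadNorm n k A p β δ W (fun i => tube n δ (a i) (v i)) ω b Set.univ ≤
          D * (∑ i, volume (tube n δ (a i) (v i))) ^ (1 / p))
    (hB : TubeBound n p (δ / (5 * β)) B) :
    TubeBound n p δ (2 ^ (p - 1) *
      ((A * ENNReal.ofReal (11 ^ n * (n * 4 ^ n) * β⁻¹ ^ (k - 2))) ^ (p - 1) * (5 ^ n * (5 * B)) +
        ENNReal.ofReal ((2 * β⁻¹ + 1) ^ n) ^ p * D ^ p)) := by
  classical
  intro m a v hv hsep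
  have hβ : 0 < β := hδ.trans hδβ
  obtain ⟨W, hW⟩ := exists_maximalSeparated n hβ
  obtain ⟨b, hb⟩ := exists_finOverlapCover n (by omega) hδ
  choose ω hω using fun i => hW.2.2 (v i) (hv i)
  obtain ⟨s, rfl⟩ := (hW.finite hβ).exists_finset_coe
  have hbr := hbroad m a v hv hsep s hW ω hω b hb
  set S := ∑ i, volume (tube n δ (a i) (v i)) with hS
  have hbr' : broadNorm n k A p β δ s (fun i => tube n δ (a i) (v i)) ω b Set.univ ^ p ≤
      D ^ p * S := by
    refine (ENNReal.rpow_le_rpow hbr (by linarith)).trans_eq ?_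
    rw [ENNReal.mul_rpow_of_nonneg _ _ (by linarith), ← ENNReal.rpow_mul,
      one_div_mul_cancel (by linarith), ENNReal.rpow_one]
  have hnarrow : ∑ ω₀ ∈ s, ∫⁻ x, (∑ i : {i // ω i = ω₀},
      Set.indicator (tube n δ (a i.1) (v i.1)) (fun _ => (1 : ℝ≥0∞)) x) ^ p ≤ 5 * B * S := by
    rw [hS, sum_fiber_eq ω s (fun i => (hω i).1), Finset.mul_sum]
    refine Finset.sum_le_sum fun ω₀ hω₀ => ?_
    have hcap : ∀ i : {i // ω i = ω₀}, ‖v i.1 - ω₀‖ < β := fun i => by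
      have h := (hω i.1).2
      rwa [i.2] at h
    have hres := TubeBound.rescale (ι := {i // ω i = ω₀}) (by omega) (by linarith) hδ hδβ hβ1 hB
      (fun i => a i.1) (fun i => v i.1) (fun i => hv i.1)
      (fun i j hij => hsep i.1 j.1 fun h => hij (Subtype.ext h)) (hW.1 ω₀ hω₀) hcap
    rwa [tsum_fintype]
  have hcaps : (s.card : ℝ≥0∞) ≤ ENNReal.ofReal ((2 * β⁻¹ + 1) ^ n) :=
    card_le_of_separated_unit hβ s hW.1 hW.2.1
  have hmain := lintegral_le_broad_add_narrow (A := A) (β := β) hkn hp hδ s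
    (T := fun i => tube n δ (a i) (v i)) (fun i => (isClosed_tube _ _ _).measurableSet)
    (fun i => (hω i).1) (N := ENNReal.ofReal (11 ^ n * (n * 4 ^ n) * β⁻¹ ^ (k - 2)))
    (fun V hV t ht hang => by
      have h := card_narrow_le hβ (by linarith) (V := V) (by omega) t (fun x hx => hW.1 x (ht hx))
        (fun x hx y hy => hW.2.1 x (ht hx) y (ht hy)) hang
      rw [hV, show k - 1 - 1 = k - 2 by omega] at h
      rw [← ENNReal.ofReal_natCast]
      exact ENNReal.ofReal_le_ofReal h) hb
  refine hmain.trans ?_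
  rw [mul_assoc (2 ^ (p - 1)) _ S, add_mul, mul_assoc _ (5 ^ n * (5 * B)) S,
    mul_assoc (5 ^ n) (5 * B) S, mul_assoc _ (D ^ p) S]
  gcongr

theorem ofReal_step_constant {n A : ℕ} {p N B M D : ℝ} (hp : 1 ≤ p) (hN : 0 ≤ N) (hB : 0 ≤ B)
    (hM : 0 ≤ M) (hD : 0 ≤ D) :
    ENNReal.ofReal (2 ^ (p - 1) * ((A * N) ^ (p - 1) * (5 ^ n * (5 * B)) + M ^ p * D ^ p)) =
      2 ^ (p - 1) * ((A * ENNReal.ofReal N) ^ (p - 1) * (5 ^ n * (5 * ENNReal.ofReal B)) +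
        ENNReal.ofReal M ^ p * ENNReal.ofReal D ^ p) := by
  have hp0 : 0 ≤ p := by linarith
  have hp1 : 0 ≤ p - 1 := by linarith
  rw [ENNReal.ofReal_mul (by positivity), ENNReal.ofReal_add (by positivity) (by positivity),
    ENNReal.ofReal_mul (by positivity), ENNReal.ofReal_mul (by positivity),
    ENNReal.ofReal_mul (by positivity), ENNReal.ofReal_mul (by positivity : (0 : ℝ) ≤ M ^ p),
    ← ENNReal.ofReal_rpow_of_nonneg (by norm_num) hp1,
    ← ENNReal.ofReal_rpow_of_nonneg (by positivity) hp1,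
    ← ENNReal.ofReal_rpow_of_nonneg hM hp0, ← ENNReal.ofReal_rpow_of_nonneg hD hp0,
    ENNReal.ofReal_mul (by positivity : (0 : ℝ) ≤ A), ENNReal.ofReal_natCast,
    ENNReal.ofReal_pow (by norm_num)]
  norm_num

theorem exists_tubeBound {n k A : ℕ} (hk2 : 2 ≤ k) (hkn : k ≤ n) {p ε : ℝ} (hp1 : 1 ≤ p)
    (hp : (n : ℝ) - k + 2 ≤ p * (n - k + 1)) (hε : 0 < ε)
    (hbroad : ∀ β : ℝ, 0 < β → β < 1 →
      ∃ Cβ : ℝ, 0 < Cβ ∧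
        ∀ (δ : ℝ), 0 < δ → δ < β →
        ∀ (m : ℕ) (a v : Fin m → Esp n),
          (∀ i, ‖v i‖ = 1) →
          (∀ i j, i ≠ j → δ ≤ ‖v i - v j‖) →
        ∀ (W : Set (Esp n)), MaximalSeparated n β W →
        ∀ (ω : Fin m → Esp n), (∀ i, ω i ∈ W ∧ ‖v i - ω i‖ < β) →
        ∀ (b : ℕ → Esp n), FinOverlapCover n δ b →
          broadNorm n k A p β δ W (fun i => tube n δ (a i) (v i)) ω b Set.univ ≤
            ENNReal.ofReal (Cβ * δ ^ (-((n : ℝ) - 1 - (n : ℝ) / p) - ε)) *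
              (∑ i, volume (tube n δ (a i) (v i))) ^ (1 / p)) :
    ∃ K : ℝ, 0 < K ∧ ∀ δ : ℝ, 0 < δ → δ < 1 →
      TubeBound n p δ (ENNReal.ofReal (K * δ ^ (-(p * ((n : ℝ) - 1) - n + p * ε)))) := by
  have hp0 : 0 < p := by linarith
  set e : ℝ := p * ((n : ℝ) - 1) - n + p * ε with he
  have hk2' : (0 : ℝ) ≤ (k : ℝ) - 2 := by
    have : (2 : ℝ) ≤ k := by exact_mod_cast hk2
    linarith
  have hgain : p * ε ≤ e - (k - 2) * (p - 1) := by
    rw [he]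
    nlinarith
  have he0 : 0 ≤ e := by
    have : 0 ≤ ((k : ℝ) - 2) * (p - 1) := mul_nonneg hk2' (by linarith)
    have : 0 < p * ε := by positivity
    linarith
  set c₀ : ℝ := 11 ^ n * (n * 4 ^ n)
  have hc₀ : 0 ≤ c₀ := by positivity
  set C₁ : ℝ := 2 ^ (p - 1) * ((A * c₀) ^ (p - 1) * (5 ^ n * 5)) * 5 ^ e with hC₁
  have hC₁0 : 0 ≤ C₁ := by positivity
  obtain ⟨β, hβ, hβ1, hβC⟩ : ∃ β : ℝ, 0 < β ∧ β ≤ 1 / 10 ∧ C₁ * β ^ (p * ε) ≤ 1 / 2 := by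
    set β₀ : ℝ := ((2 * C₁ + 1)⁻¹) ^ (p * ε)⁻¹ with hβ₀
    have hβ₀0 : 0 < β₀ := by positivity
    refine ⟨min (1 / 10) β₀, by positivity, min_le_left _ _, ?_⟩
    calc C₁ * (min (1 / 10) β₀) ^ (p * ε) ≤ C₁ * β₀ ^ (p * ε) := by
          gcongr
          exact min_le_right _ _
      _ = C₁ * (2 * C₁ + 1)⁻¹ := by
          rw [hβ₀, Real.rpow_inv_rpow (by positivity) (by positivity)]
      _ ≤ 1 / 2 := by
          rw [← div_eq_mul_inv, div_le_div_iff₀ (by positivity) (by norm_num)]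
          linarith
  obtain ⟨Cβ, hCβ, hbr⟩ := hbroad β hβ (by linarith)
  set M : ℝ := (2 * β⁻¹ + 1) ^ n
  have hM : 0 < M := by positivity
  set C₂ : ℝ := 2 ^ (p - 1) * (M ^ p * Cβ ^ p) with hC₂
  have hC₂0 : 0 < C₂ := by positivity
  set K : ℝ := 2 * C₂ + M ^ (p - 1)
  have hK : 0 < K := by positivity
  refine ⟨K, hK, ?_⟩
  have hind : ∀ (N : ℕ) (δ : ℝ), 0 < δ → δ < 1 → (1 / 2) ^ N ≤ δ →
      TubeBound n p δ (ENNReal.ofReal (K * δ ^ (-e))) := by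
    intro N
    induction N with
    | zero => intro δ _ h1 h2; simp at h2; linarith
    | succ N ih =>
      intro δ hδ hδ1 hN
      rcases le_or_gt β δ with hβδ | hδβ
      · intro m a v hv hsep
        refine (tubeBound_of_le hp1 hβ hβδ m a v hv hsep).trans ?_
        gcongr
        rw [ENNReal.ofReal_rpow_of_pos hM]
        refine ENNReal.ofReal_le_ofReal ?_
        have h1 : 1 ≤ δ ^ (-e) :=
          Real.one_le_rpow_of_pos_of_le_one_of_nonpos hδ hδ1.le (by linarith)
        calc M ^ (p - 1) ≤ K := by linarith
          _ ≤ K * δ ^ (-e) := le_mul_of_one_le_right hK.le h1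
      · have hδ' : 2 * δ ≤ δ / (5 * β) := by
          rw [le_div_iff₀ (by positivity)]
          nlinarith
        have hδ'1 : δ / (5 * β) < 1 := by
          rw [div_lt_one (by positivity)]
          linarith
        have hB := ih (δ / (5 * β)) (by positivity) hδ'1 (by
          rw [pow_succ] at hN
          linarith)
        intro m a v hv hsep
        refine (tubeBound_step hk2 hkn hp1 hδ hδβ hβ1 (hbr δ hδ hδβ) hB m a v hv hsep).trans ?_
        gcongr
        have hexp : (Cβ * δ ^ (-((n : ℝ) - 1 - (n : ℝ) / p) - ε)) ^ p = Cβ ^ p * δ ^ (-e) := by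
          rw [Real.mul_rpow hCβ.le (by positivity), ← Real.rpow_mul hδ.le]
          congr 2
          rw [he]
          field_simp
          ring
        have hscale : (δ / (5 * β)) ^ (-e) = δ ^ (-e) * (5 ^ e * β ^ e) := by
          rw [Real.div_rpow hδ.le (by positivity), Real.rpow_neg (by positivity : 0 ≤ 5 * β),
            Real.mul_rpow (by norm_num) hβ.le, div_inv_eq_mul]
        have hnum : (A * (c₀ * β⁻¹ ^ (k - 2))) ^ (p - 1) * β ^ e ≤
            (A * c₀) ^ (p - 1) * β ^ (p * ε) := by
          have h1 : (β⁻¹ ^ (k - 2)) ^ (p - 1) = β ^ (-((k - 2) * (p - 1) : ℝ)) := by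
            rw [← Real.rpow_natCast, ← Real.rpow_mul (by positivity), Nat.cast_sub hk2,
              Real.inv_rpow hβ.le, Real.rpow_neg hβ.le]
            norm_num
          rw [← mul_assoc, Real.mul_rpow (by positivity) (by positivity), h1, mul_assoc,
            ← Real.rpow_add hβ]
          gcongr _ * ?_
          exact Real.rpow_le_rpow_of_exponent_ge hβ (by linarith) (by linarith)
        have hreal : 2 ^ (p - 1) * ((A * (c₀ * β⁻¹ ^ (k - 2))) ^ (p - 1) *
            (5 ^ n * (5 * (K * (δ / (5 * β)) ^ (-e)))) +
            M ^ p * (Cβ * δ ^ (-((n : ℝ) - 1 - (n : ℝ) / p) - ε)) ^ p) ≤ K * δ ^ (-e) := by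
          have hδe : 0 < δ ^ (-e) := by positivity
          rw [hexp, hscale]
          calc _ = (2 ^ (p - 1) * (5 ^ n * 5) * 5 ^ e * K *
                ((A * (c₀ * β⁻¹ ^ (k - 2))) ^ (p - 1) * β ^ e) + C₂) * δ ^ (-e) := by
                rw [hC₂]; ring
            _ ≤ (2 ^ (p - 1) * (5 ^ n * 5) * 5 ^ e * K *
                ((A * c₀) ^ (p - 1) * β ^ (p * ε)) + C₂) * δ ^ (-e) := by gcongr
            _ = (C₁ * β ^ (p * ε) * K + C₂) * δ ^ (-e) := by rw [hC₁]; ring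
            _ ≤ (1 / 2 * K + C₂) * δ ^ (-e) := by gcongr
            _ ≤ K * δ ^ (-e) := by
                gcongr
                have : 0 < M ^ (p - 1) := by positivity
                linarith
        rw [← ofReal_step_constant hp1 (by positivity) (by positivity) hM.le (by positivity)]
        exact ENNReal.ofReal_le_ofReal hreal
  intro δ hδ hδ1
  obtain ⟨N, hN⟩ := exists_pow_lt_of_lt_one hδ (by norm_num : (1 / 2 : ℝ) < 1)
  exact hind N δ hδ hδ1 hN.le

theorem eLpNorm_sum_indicator {α ι : Type*} [MeasurableSpace α] {μ : Measure α} [Fintype ι]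
    (T : ι → Set α) {p : ℝ} (hp : 0 < p) :
    eLpNorm (fun x => ∑ i, Set.indicator (T i) (fun _ => (1 : ℝ)) x) (ENNReal.ofReal p) μ =
      (∫⁻ x, (∑ i, Set.indicator (T i) (fun _ => (1 : ℝ≥0∞)) x) ^ p ∂μ) ^ (1 / p) := by
  rw [eLpNorm_eq_lintegral_rpow_enorm_toReal (by simpa using hp) ENNReal.ofReal_ne_top,
    ENNReal.toReal_ofReal hp.le]
  congr 2 with x
  congr 1
  have hnn : ∀ i, 0 ≤ Set.indicator (T i) (fun _ => (1 : ℝ)) x := fun i =>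
    Set.indicator_nonneg (fun _ _ => zero_le_one) x
  rw [Real.enorm_of_nonneg (Finset.sum_nonneg fun i _ => hnn i),
    ENNReal.ofReal_sum_of_nonneg fun i _ => hnn i]
  refine Finset.sum_congr rfl fun i _ => ?_
  by_cases h : x ∈ T i
  · simp [h]
  · simp [h]

/-- Proposition 2.1 (passing from k-broad to linear estimates): let `2 ≤ k ≤ n`,
`p ≥ (n−k+2)/(n−k+1)`, `ε > 0` and `A ∈ ℕ`.  If for every `β ∈ (0,1)` there is `C_β > 0`
such that the k-broad estimate `‖Σ_T χ_T‖_{BL^p_{k,A}(ℝⁿ)} ≤ C_β δ^{−(n−1−n/p)−ε}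
(Σ_T |T|)^{1/p}` holds for every `0 < δ < β`, every direction-separated family of δ-tubes,
every cap partition and every finitely-overlapping cover by δ-balls, then there is `C > 0`
such that `‖Σ_T χ_T‖_{L^p(ℝⁿ)} ≤ C δ^{−(n−1−n/p)−ε} (Σ_T |T|)^{1/p}` for every
`0 < δ < 1` and every direction-separated family of δ-tubes. -/
theorem statement4 (n k : ℕ) (hn : 2 ≤ n) (hk2 : 2 ≤ k) (hkn : k ≤ n) (p : ℝ)
    (hp : ((n : ℝ) - (k : ℝ) + 2) / ((n : ℝ) - (k : ℝ) + 1) ≤ p)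
    (ε : ℝ) (hε : 0 < ε) (A : ℕ)
    (hbroad : ∀ β : ℝ, 0 < β → β < 1 →
      ∃ Cβ : ℝ, 0 < Cβ ∧
        ∀ (δ : ℝ), 0 < δ → δ < β →
        ∀ (m : ℕ) (a v : Fin m → Esp n),
          (∀ i, ‖v i‖ = 1) →
          (∀ i j, i ≠ j → δ ≤ ‖v i - v j‖) →
        ∀ (W : Set (Esp n)), MaximalSeparated n β W →
        ∀ (ω : Fin m → Esp n), (∀ i, ω i ∈ W ∧ ‖v i - ω i‖ < β) →
        ∀ (b : ℕ → Esp n), FinOverlapCover n δ b →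
          broadNorm n k A p β δ W (fun i => tube n δ (a i) (v i)) ω b Set.univ ≤
            ENNReal.ofReal (Cβ * δ ^ (-((n : ℝ) - 1 - (n : ℝ) / p) - ε)) *
              (∑ i, volume (tube n δ (a i) (v i))) ^ (1 / p)) :
    ∃ C : ℝ, 0 < C ∧
      ∀ (δ : ℝ), 0 < δ → δ < 1 →
      ∀ (m : ℕ) (a v : Fin m → Esp n),
        (∀ i, ‖v i‖ = 1) →
        (∀ i j, i ≠ j → δ ≤ ‖v i - v j‖) →
        eLpNorm (fun x => ∑ i, Set.indicator (tube n δ (a i) (v i)) (fun _ => (1 : ℝ)) x)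
            (ENNReal.ofReal p) volume ≤
          ENNReal.ofReal (C * δ ^ (-((n : ℝ) - 1 - (n : ℝ) / p) - ε)) *
            (∑ i, volume (tube n δ (a i) (v i))) ^ (1 / p) := by
  have hkn' : (k : ℝ) ≤ n := by exact_mod_cast hkn
  have hden : 0 < (n : ℝ) - k + 1 := by linarith
  have hp1 : 1 ≤ p := by
    refine le_trans ?_ hp
    rw [le_div_iff₀ hden]
    linarith
  have hp0 : 0 < p := by linarith
  obtain ⟨K, hK, hT⟩ :=
    exists_tubeBound hk2 hkn hp1 ((div_le_iff₀ hden).1 hp) hε hbroad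
  refine ⟨K ^ (1 / p), by positivity, fun δ hδ hδ1 m a v hv hsep => ?_⟩
  rw [eLpNorm_sum_indicator _ hp0]
  refine (ENNReal.rpow_le_rpow (hT δ hδ hδ1 m a v hv hsep) (by positivity)).trans_eq ?_
  rw [ENNReal.mul_rpow_of_nonneg _ _ (by positivity), ENNReal.ofReal_rpow_of_pos (by positivity),
    Real.mul_rpow hK.le (by positivity), ← Real.rpow_mul hδ.le]
  congr 5
  field_simp
  ring

end
end

section
/- Direction-separated families satisfy the linear Wolff axiom: for every n ≥ 2 there exists a constant N = N(n) ≥ 1 such that for every 0 < δ < 1, every finite direction-separated family 𝕋 of δ-tubes in ℝⁿ, and every rectangular box E ⊆ ℝⁿ (that is, E = Φ(∏_{i=1}^{n}[0, s_i]) for some isometry Φ of ℝⁿ and some side lengths s₁, …, s_n > 0), one has #{T ∈ 𝕋 : T ⊆ E} ≤ N · δ^{−(n−1)} · |E|, where |E| denotes Lebesgue measure. -/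
open MeasureTheory Metric InnerProductGeometry
open scoped RealInnerProductSpace ENNReal NNReal

noncomputable section

/-- Two unit vectors whose `k`-th coordinates have the same sign and are at least `n ^ (-1/2)` in
absolute value are at distance less than `δ` if their other coordinates differ by at most `δ / n`. -/
lemma norm_sub_lt_of_abs_coord_sub_le {n : ℕ} (hn : 0 < n) {δ : ℝ} (hδ : 0 < δ) (k : Fin n)
    {w z : Esp n} (hw : ‖w‖ = 1) (hz : ‖z‖ = 1) (hwk : 1 ≤ n * (w k) ^ 2)
    (hzk : 1 ≤ n * (z k) ^ 2) (hsign : 0 ≤ w k * z k)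
    (hwz : ∀ i, i ≠ k → |w i - z i| ≤ δ / n) : ‖w - z‖ < δ := by
  have hn' : (0 : ℝ) < n := by exact_mod_cast hn
  have hsplit : ∀ f : Fin n → ℝ, ∑ i, f i = f k + ∑ i ∈ Finset.univ.erase k, f i := fun f ↦
    (Finset.add_sum_erase _ f (Finset.mem_univ k)).symm
  have hw2 : ∑ i, (w i) ^ 2 = 1 := by rw [← EuclideanSpace.real_norm_sq_eq, hw, one_pow]
  have hz2 : ∑ i, (z i) ^ 2 = 1 := by rw [← EuclideanSpace.real_norm_sq_eq, hz, one_pow]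
  set D := ∑ i ∈ Finset.univ.erase k, (w i - z i) ^ 2
  set S := ∑ i ∈ Finset.univ.erase k, (w i + z i) ^ 2
  have hD0 : 0 ≤ D := Finset.sum_nonneg fun i _ ↦ sq_nonneg _
  have hDle : D ≤ (n - 1) * (δ / n) ^ 2 := by
    calc D ≤ ∑ _i ∈ Finset.univ.erase k, (δ / n) ^ 2 := Finset.sum_le_sum fun i hi ↦ by
          rw [← sq_abs]
          exact pow_le_pow_left₀ (abs_nonneg _) (hwz i (Finset.ne_of_mem_erase hi)) 2
      _ = (n - 1) * (δ / n) ^ 2 := by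
          rw [Finset.sum_const, Finset.card_erase_of_mem (Finset.mem_univ k), Finset.card_univ,
            Fintype.card_fin, nsmul_eq_mul, Nat.cast_sub hn, Nat.cast_one]
  have hS4 : S ≤ 4 := by
    have h : ∑ i, (w i + z i) ^ 2 ≤ ∑ i, (2 * (w i) ^ 2 + 2 * (z i) ^ 2) :=
      Finset.sum_le_sum fun i _ ↦ by nlinarith [sq_nonneg (w i - z i)]
    rw [Finset.sum_add_distrib, ← Finset.mul_sum, ← Finset.mul_sum, hw2, hz2, hsplit] at h
    nlinarith [sq_nonneg (w k + z k)]
  have hcross : (w k - z k) * (w k + z k) =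
      -∑ i ∈ Finset.univ.erase k, (w i - z i) * (w i + z i) := by
    have h : ∑ i, (w i - z i) * (w i + z i) = 0 := by
      rw [Finset.sum_congr rfl fun i _ ↦ show (w i - z i) * (w i + z i) = w i ^ 2 - z i ^ 2 by ring,
        Finset.sum_sub_distrib, hw2, hz2, sub_self]
    rw [hsplit] at h
    linarith
  have hcs : (w k - z k) ^ 2 * (w k + z k) ^ 2 ≤ D * S := by
    rw [← mul_pow, hcross, neg_sq]
    exact Finset.sum_mul_sq_le_sq_mul_sq _ _ _
  have hsum : 4 ≤ n * (w k + z k) ^ 2 := by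
    have h : 1 ≤ n * (w k * z k) := by
      have h0 : 0 ≤ n * (w k * z k) := by positivity
      have h1 : 1 ≤ (n * (w k * z k)) ^ 2 := by nlinarith
      nlinarith
    nlinarith
  have hk : (w k - z k) ^ 2 ≤ n * D := by
    have h1 : (w k - z k) ^ 2 * (n * (w k + z k) ^ 2) ≤ n * (D * S) := by nlinarith
    have h2 : (w k - z k) ^ 2 * 4 ≤ (w k - z k) ^ 2 * (n * (w k + z k) ^ 2) :=
      mul_le_mul_of_nonneg_left hsum (sq_nonneg _)
    have h3 : n * (D * S) ≤ n * (D * 4) := by gcongr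
    linarith
  have hnorm : ‖w - z‖ ^ 2 = (w k - z k) ^ 2 + D := by
    rw [EuclideanSpace.real_norm_sq_eq, hsplit]
    rfl
  refine lt_of_pow_lt_pow_left₀ 2 hδ.le ?_
  calc ‖w - z‖ ^ 2 ≤ (n + 1) * D := by rw [hnorm]; linarith
    _ ≤ (n + 1) * ((n - 1) * (δ / n) ^ 2) := by gcongr
    _ = δ ^ 2 - (δ / n) ^ 2 := by field_simp; ring
    _ < δ ^ 2 := by
        have : 0 < (δ / n) ^ 2 := by positivity
        linarith

/-- The number of integers in `[⌊-x⌋, ⌊x⌋]` is at most `2 * (x + 1)`. -/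
lemma card_Icc_floor_neg_le {x : ℝ} (hx : 0 ≤ x) :
    ((Finset.Icc ⌊-x⌋ ⌊x⌋).card : ℝ) ≤ 2 * (x + 1) := by
  have h : ⌊-x⌋ ≤ ⌊x⌋ := Int.floor_le_floor (by linarith)
  have hc : (((Finset.Icc ⌊-x⌋ ⌊x⌋).card : ℤ) : ℝ) = ⌊x⌋ + 1 - ⌊-x⌋ := by
    rw [Int.card_Icc, Int.toNat_of_nonneg (by omega)]
    push_cast
    ring
  rw [Int.cast_natCast] at hc
  rw [hc]
  have h1 := Int.floor_le x
  have h2 := Int.lt_floor_add_one (-x)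
  linarith

/-- A `δ`-separated family of unit vectors in the box `∏ [-s i, s i]` whose `k`-th coordinates are
all at least `n ^ (-1/2)` in absolute value has at most `(4 n) ^ n δ ^ (1 - n) ∏ s i` members. -/
lemma card_le_of_separated_of_coord_large {n : ℕ} (hn : 0 < n) {δ : ℝ} (hδ : 0 < δ)
    {ι : Type*} (S : Finset ι) (w : ι → Esp n) (hw : ∀ j ∈ S, ‖w j‖ = 1)
    (hsep : ∀ i ∈ S, ∀ j ∈ S, i ≠ j → δ ≤ ‖w i - w j‖) (k : Fin n)
    (hk : ∀ j ∈ S, 1 ≤ n * (w j k) ^ 2) {s : Fin n → ℝ} (hs : ∀ i, δ ≤ s i)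
    (hws : ∀ j ∈ S, ∀ i, |w j i| ≤ s i) :
    (S.card : ℝ) ≤ (4 * n) ^ n * (δ⁻¹) ^ (n - 1) * ∏ i, s i := by
  have hn' : (1 : ℝ) ≤ n := by exact_mod_cast hn
  have hs0 : ∀ i, 0 < s i := fun i ↦ hδ.trans_le (hs i)
  rcases S.eq_empty_or_nonempty with rfl | ⟨j₀, hj₀⟩
  · rw [Finset.card_empty, Nat.cast_zero]
    have := Finset.prod_nonneg fun i (_ : i ∈ Finset.univ) ↦ (hs0 i).le
    positivity
  have hsk : 1 ≤ n * s k := by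
    have h1 : |w j₀ k| ≤ 1 := by
      have := PiLp.norm_apply_le (w j₀) k
      rwa [hw j₀ hj₀, Real.norm_eq_abs] at this
    have h2 : (w j₀ k) ^ 2 ≤ |w j₀ k| := by
      rw [← sq_abs]
      nlinarith [abs_nonneg (w j₀ k)]
    nlinarith [hk j₀ hj₀, hws j₀ hj₀ k]
  set e : Fin n → ℝ := fun i ↦ if i = k then 1 else δ / n with he
  have he0 : ∀ i, 0 < e i := fun i ↦ by
    simp only [he]
    split_ifs <;> positivity
  have hcard : S.card ≤ (Fintype.piFinset fun i ↦ Finset.Icc ⌊-(s i / e i)⌋ ⌊s i / e i⌋).card := by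
    refine Finset.card_le_card_of_injOn (fun j i ↦ ⌊w j i / e i⌋) (fun j hj ↦ ?_) ?_
    · simp only [Finset.mem_coe, Fintype.mem_piFinset, Finset.mem_Icc]
      intro i
      have h := abs_le.1 (hws j hj i)
      constructor
      · rw [← neg_div]
        exact Int.floor_le_floor (div_le_div_of_nonneg_right h.1 (he0 i).le)
      · exact Int.floor_le_floor (div_le_div_of_nonneg_right h.2 (he0 i).le)
    · intro i hi j hj hij
      by_contra hne
      refine (hsep i hi j hj hne).not_gt
        (norm_sub_lt_of_abs_coord_sub_le hn hδ k (hw i hi) (hw j hj) (hk i hi) (hk j hj) ?_ ?_)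
      · have h : ⌊w i k⌋ = ⌊w j k⌋ := by simpa [he] using congrFun hij k
        rcases le_or_gt 0 (w i k) with h0 | h0
        · exact mul_nonneg h0 (Int.floor_nonneg.1 (h ▸ Int.floor_nonneg.2 h0))
        · have h1 : w j k < 0 := by
            by_contra! h1
            exact h0.not_ge (Int.floor_nonneg.1 (h ▸ Int.floor_nonneg.2 h1))
          exact (mul_pos_of_neg_of_neg h0 h1).le
      · intro l hl
        have h := Int.abs_sub_lt_one_of_floor_eq_floor (congrFun hij l)
        simp only [he, if_neg hl] at h
        rw [← sub_div, abs_div, abs_of_pos (show 0 < δ / n by positivity),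
          div_lt_one (by positivity)] at h
        exact h.le
  have hcoord : ∀ i, ((Finset.Icc ⌊-(s i / e i)⌋ ⌊s i / e i⌋).card : ℝ) ≤
      4 * n * s i * (if i = k then 1 else δ⁻¹) := fun i ↦ by
    refine (card_Icc_floor_neg_le (div_pos (hs0 i) (he0 i)).le).trans ?_
    by_cases hi : i = k
    · subst hi
      simp only [he, if_true]
      nlinarith [hs0 i]
    · simp only [he, if_neg hi]
      have h1 : 1 ≤ s i * δ⁻¹ := by
        rw [← div_eq_mul_inv]
        exact (one_le_div hδ).2 (hs i)
      have h2 : s i / (δ / n) = n * (s i * δ⁻¹) := by field_simp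
      rw [h2]
      nlinarith
  have hprod : ∏ i : Fin n, (if i = k then 1 else δ⁻¹) = (δ⁻¹) ^ (n - 1) := by
    rw [← Finset.mul_prod_erase _ _ (Finset.mem_univ k), if_pos rfl, one_mul,
      Finset.prod_congr rfl fun i hi ↦ if_neg (Finset.ne_of_mem_erase hi), Finset.prod_const,
      Finset.card_erase_of_mem (Finset.mem_univ k), Finset.card_univ, Fintype.card_fin]
  calc (S.card : ℝ)
      ≤ ∏ i, ((Finset.Icc ⌊-(s i / e i)⌋ ⌊s i / e i⌋).card : ℝ) := by
        rw [Fintype.card_piFinset] at hcard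
        exact_mod_cast hcard
    _ ≤ ∏ i, 4 * n * s i * (if i = k then 1 else δ⁻¹) :=
        Finset.prod_le_prod (fun _ _ ↦ Nat.cast_nonneg _) fun i _ ↦ hcoord i
    _ = (4 * n) ^ n * (δ⁻¹) ^ (n - 1) * ∏ i, s i := by
        rw [Finset.prod_mul_distrib, Finset.prod_mul_distrib, hprod, Finset.prod_const,
          Finset.card_univ, Fintype.card_fin]
        ring

/-- Some coordinate of a unit vector is at least `n ^ (-1/2)` in absolute value. -/
lemma exists_one_le_mul_coord_sq {n : ℕ} {w : Esp n} (hw : ‖w‖ = 1) :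
    ∃ k, 1 ≤ n * (w k) ^ 2 := by
  have hw2 : ∑ i, (w i) ^ 2 = 1 := by rw [← EuclideanSpace.real_norm_sq_eq, hw, one_pow]
  by_contra! h
  have h1 : ∑ i, n * (w i) ^ 2 = n := by rw [← Finset.mul_sum, hw2, mul_one]
  have hne : (Finset.univ : Finset (Fin n)).Nonempty := by
    rw [Finset.nonempty_iff_ne_empty]
    intro h0
    rw [h0, Finset.sum_empty] at hw2
    exact zero_ne_one hw2
  have h2 := Finset.sum_lt_sum_of_nonempty hne fun i _ ↦ h i
  rw [h1] at h2
  simp at h2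

/-- A `δ`-separated family of unit vectors in the box `∏ [-s i, s i]` with all `s i ≥ δ` has at
most `n (4 n) ^ n δ ^ (1 - n) ∏ s i` members. -/
lemma card_le_of_separated_of_abs_coord_le {n : ℕ} (hn : 0 < n) {δ : ℝ} (hδ : 0 < δ)
    {ι : Type*} (S : Finset ι) (w : ι → Esp n) (hw : ∀ j ∈ S, ‖w j‖ = 1)
    (hsep : ∀ i ∈ S, ∀ j ∈ S, i ≠ j → δ ≤ ‖w i - w j‖) {s : Fin n → ℝ} (hs : ∀ i, δ ≤ s i)
    (hws : ∀ j ∈ S, ∀ i, |w j i| ≤ s i) :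
    (S.card : ℝ) ≤ n * ((4 * n) ^ n * (δ⁻¹) ^ (n - 1) * ∏ i, s i) := by
  classical
  have hcover : S ⊆ Finset.univ.biUnion fun k : Fin n ↦ S.filter fun j ↦ 1 ≤ n * (w j k) ^ 2 := by
    intro j hj
    obtain ⟨k, hk⟩ := exists_one_le_mul_coord_sq (hw j hj)
    exact Finset.mem_biUnion.2 ⟨k, Finset.mem_univ k, Finset.mem_filter.2 ⟨hj, hk⟩⟩
  calc (S.card : ℝ)
      ≤ ∑ k : Fin n, ((S.filter fun j ↦ 1 ≤ n * (w j k) ^ 2).card : ℝ) := by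
        exact_mod_cast (Finset.card_le_card hcover).trans Finset.card_biUnion_le
    _ ≤ ∑ _k : Fin n, (4 * n) ^ n * (δ⁻¹) ^ (n - 1) * ∏ i, s i :=
        Finset.sum_le_sum fun k _ ↦ card_le_of_separated_of_coord_large hn hδ _ w
          (fun j hj ↦ hw j (Finset.mem_of_mem_filter j hj))
          (fun i hi j hj ↦ hsep i (Finset.mem_of_mem_filter i hi) j (Finset.mem_of_mem_filter j hj))
          k (fun j hj ↦ (Finset.mem_filter.1 hj).2) hs
          (fun j hj ↦ hws j (Finset.mem_of_mem_filter j hj))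
    _ = n * ((4 * n) ^ n * (δ⁻¹) ^ (n - 1) * ∏ i, s i) := by
        rw [Finset.sum_const, Finset.card_univ, Fintype.card_fin, nsmul_eq_mul]

lemma add_smul_mem_tube {n : ℕ} {δ : ℝ} (hδ : 0 ≤ δ) (a : Esp n) {v : Esp n} (hv : ‖v‖ = 1)
    {t : ℝ} (ht : |t| ≤ 1 / 2) : a + t • v ∈ tube n δ a v := by
  have h : ⟪a + t • v - a, v⟫ = t := by
    rw [add_sub_cancel_left, real_inner_smul_left, real_inner_self_eq_norm_sq, hv, one_pow, mul_one]
  refine ⟨by rwa [h], ?_⟩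
  rw [h, add_sub_cancel_left, sub_self, norm_zero]
  exact hδ

lemma add_mem_tube_of_norm_le {n : ℕ} {δ : ℝ} (hδ : δ ≤ 1) (a : Esp n) {u v : Esp n}
    (hv : ‖v‖ = 1) (hu : ‖u‖ ≤ δ / 2) : a + u ∈ tube n δ a v := by
  have h : |⟪u, v⟫| ≤ δ / 2 := (abs_real_inner_le_norm u v).trans (by rwa [hv, mul_one])
  refine ⟨?_, ?_⟩
  · rw [add_sub_cancel_left]
    linarith
  · rw [add_sub_cancel_left]
    refine (norm_sub_le _ _).trans ?_
    rw [norm_smul, hv, mul_one, Real.norm_eq_abs]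
    linarith

lemma volume_setOf_coord_mem_Icc {n : ℕ} (s : Fin n → ℝ) :
    volume {x : Esp n | ∀ i, x i ∈ Set.Icc 0 (s i)} = ∏ i, ENNReal.ofReal (s i) := by
  have h := (PiLp.volume_preserving_ofLp (Fin n)).measure_preimage
    (s := Set.Icc (0 : Fin n → ℝ) s) measurableSet_Icc.nullMeasurableSet
  rw [Real.volume_Icc_pi] at h
  simp only [Pi.zero_apply, sub_zero] at h
  rw [← h]
  congr 1
  ext x
  simp [Set.mem_Icc, Pi.le_def, forall_and]

/-- Isometries of Euclidean space preserve volume. -/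
lemma volume_image_isometryEquiv {n : ℕ} (Φ : Esp n ≃ᵢ Esp n) (E : Set (Esp n)) :
    volume (Φ '' E) = volume E := by
  have hΦ : ∀ x, Φ x = Φ 0 + Φ.toRealLinearIsometryEquiv x := fun x ↦ by simp
  have h : Φ '' E = (fun x ↦ Φ 0 + x) '' (Φ.toRealLinearIsometryEquiv '' E) := by
    rw [Set.image_image]
    exact Set.image_congr fun x _ ↦ hΦ x
  rw [h, Set.image_add_left, measure_preimage_add, LinearIsometryEquiv.image_eq_preimage_symm]
  exact (LinearIsometryEquiv.measurePreserving _).measure_preimage_emb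
    (LinearIsometryEquiv.toHomeomorph _).measurableEmbedding E

/-- Direction-separated families satisfy the linear Wolff axiom: for every `n ≥ 2` there
is `N = N(n) ≥ 1` such that for every `0 < δ < 1`, every direction-separated family of
δ-tubes and every rectangular box `E = Φ(Π_i [0, s_i])` (`Φ` an isometry of ℝⁿ),
`#{T ∈ 𝕋 : T ⊆ E} ≤ N δ^{−(n−1)} |E|`. -/
theorem statement11 (n : ℕ) (hn : 2 ≤ n) :
    ∃ N : ℝ, 1 ≤ N ∧
      ∀ (δ : ℝ), 0 < δ → δ < 1 →
      ∀ (m : ℕ) (a v : Fin m → Esp n),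
        (∀ i, ‖v i‖ = 1) →
        (∀ i j, i ≠ j → δ ≤ ‖v i - v j‖) →
      ∀ (Φ : Esp n ≃ᵢ Esp n) (s : Fin n → ℝ), (∀ i, 0 < s i) →
        (Nat.card {i : Fin m //
            tube n δ (a i) (v i) ⊆ Φ '' {x : Esp n | ∀ i', x i' ∈ Set.Icc 0 (s i')}} : ℝ≥0∞) ≤
          ENNReal.ofReal (N * δ ^ (-((n : ℝ) - 1))) *
            volume (Φ '' {x : Esp n | ∀ i', x i' ∈ Set.Icc 0 (s i')}) := by
  classical
  have hn0 : 0 < n := by omega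
  have hn1 : (1 : ℝ) ≤ n := by exact_mod_cast hn0
  refine ⟨n * (4 * n) ^ n, one_le_mul_of_one_le_of_one_le hn1 (one_le_pow₀ (by linarith)), ?_⟩
  intro δ hδ hδ1 m a v hv hsep Φ s hs
  set E : Set (Esp n) := {x | ∀ i', x i' ∈ Set.Icc 0 (s i')} with hE
  set S : Finset (Fin m) := Finset.univ.filter fun i ↦ tube n δ (a i) (v i) ⊆ Φ '' E
  have hcard : Nat.card {i : Fin m // tube n δ (a i) (v i) ⊆ Φ '' E} = S.card := by
    rw [Nat.card_eq_fintype_card, Fintype.card_subtype]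
  set L := Φ.symm.toRealLinearIsometryEquiv with hL
  have hΦ : ∀ x y, Φ.symm (x + y) = Φ.symm x + L y := fun x y ↦ by
    have hz : ∀ z, Φ.symm z = Φ.symm 0 + L z := fun z ↦ by simp [hL]
    rw [hz (x + y), hz x, map_add, add_assoc]
  have hmem : ∀ j ∈ S, ∀ u, a j + u ∈ tube n δ (a j) (v j) → Φ.symm (a j) + L u ∈ E := by
    intro j hj u hu
    obtain ⟨x, hx, hxu⟩ := (Finset.mem_filter.1 hj).2 hu
    rwa [← hΦ, ← hxu, Φ.symm_apply_apply]
  have hkey : (S.card : ℝ) ≤ n * (4 * n) ^ n * δ ^ (-((n : ℝ) - 1)) * ∏ i, s i := by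
    have hpow : δ ^ (-((n : ℝ) - 1)) = (δ⁻¹) ^ (n - 1) := by
      rw [Real.rpow_neg hδ.le, ← Nat.cast_one, ← Nat.cast_sub hn0, Real.rpow_natCast, inv_pow]
    rw [hpow]
    rcases S.eq_empty_or_nonempty with h0 | ⟨j₀, hj₀⟩
    · rw [h0, Finset.card_empty, Nat.cast_zero]
      have := Finset.prod_nonneg fun i (_ : i ∈ Finset.univ) ↦ (hs i).le
      positivity
    have hsδ : ∀ i, δ ≤ s i := fun i ↦ by
      have hball : ∀ t : ℝ, |t| ≤ δ / 2 → Φ.symm (a j₀) i + t ∈ Set.Icc 0 (s i) := fun t ht ↦ by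
        have h := hmem j₀ hj₀ (L.symm (EuclideanSpace.single i t))
          (add_mem_tube_of_norm_le hδ1.le _ (hv j₀) (by simpa using ht)) i
        simpa using h
      have h1 := (hball (δ / 2) (abs_of_pos (by positivity)).le).2
      have h2 := (hball (-(δ / 2)) (by rw [abs_neg, abs_of_pos (by positivity)])).1
      linarith
    refine (card_le_of_separated_of_abs_coord_le hn0 hδ S (fun j ↦ L (v j))
      (fun j _ ↦ by rw [L.norm_map, hv]) (fun i _ j _ hij ↦ ?_) hsδ (fun j hj i ↦ ?_)).trans_eq
      (by ring)
    · rw [← map_sub, L.norm_map]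
      exact hsep i j hij
    · have hseg : ∀ t : ℝ, |t| ≤ 1 / 2 →
          Φ.symm (a j) i + t * L (v j) i ∈ Set.Icc 0 (s i) := fun t ht ↦ by
        have h := hmem j hj (t • v j) (add_smul_mem_tube hδ.le _ (hv j) ht) i
        simpa using h
      have h1 := hseg (1 / 2) (by norm_num)
      have h2 := hseg (-(1 / 2)) (by norm_num)
      exact abs_le.2 ⟨by linarith [h1.1, h2.2], by linarith [h1.2, h2.1]⟩
  rw [hcard, volume_image_isometryEquiv, hE, volume_setOf_coord_mem_Icc,
    ← ENNReal.ofReal_prod_of_nonneg fun i _ ↦ (hs i).le,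
    ← ENNReal.ofReal_mul (by positivity), ← ENNReal.ofReal_natCast]
  exact ENNReal.ofReal_le_ofReal hkey

end
end
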